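/- A quintic del Pezzo surface S ⊂ P^5 admits a congruence of secant lines: through the general point of P^5 there passes a unique secant line to S. The general line of this congruence is the general fiber of the dominant map μ: P^5 ⇢ P^4 defined by the 5-dimensional linear system of quadric hypersurfaces through S, and if X is a general cubic fourfold containing S, the restriction μ|_X: X ⇢ P^4 is birational. -/

import Mathlib

noncomputable section
open MvPolynomial

/-- Complex projective `n`-space, as the projectivization of `ℂ^{n+1}`. -/
abbrev P (n : ℕ) := Projectivization ℂ (Fin (n + 1) → ℂ)

instance (n : ℕ) : Nonempty (P n) :=
  ⟨Projectivization.mk ℂ (fun _ => 1) (by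
    intro h
    exact one_ne_zero (congrFun h 0))⟩

/-- A property `Φ` holds at a general (generic) point of affine space `ℂ^N`. -/
def GenericAff {N : ℕ} (Φ : (Fin N → ℂ) → Prop) : Prop :=
  ∃ g : MvPolynomial (Fin N) ℂ, g ≠ 0 ∧ ∀ v, eval v g ≠ 0 → Φ v

/-- A property `Φ` holds at a general point of `ℙ^n`. -/
def GenericP {n : ℕ} (Φ : P n → Prop) : Prop :=
  GenericAff fun v : Fin (n + 1) → ℂ => ∀ h : v ≠ 0, Φ (Projectivization.mk ℂ v h)

/-- Projective algebraic subsets of `ℙ^n`: common zero loci of homogeneous polynomials. -/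
def PAlgSet {n : ℕ} (Z : Set (P n)) : Prop :=
  ∃ I : Set (MvPolynomial (Fin (n + 1)) ℂ),
    (∀ f ∈ I, ∃ d, f.IsHomogeneous d) ∧ Z = {x | ∀ f ∈ I, eval x.rep f = 0}

/-- Zariski closure of a subset of `ℙ^n`. -/
def zclosure {n : ℕ} (A : Set (P n)) : Set (P n) := ⋂₀ {Z | PAlgSet Z ∧ A ⊆ Z}

/-- A property `Φ` holds at a general point of the subvariety `A ⊆ ℙ^n`. -/
def GenericOn {n : ℕ} (A : Set (P n)) (Φ : P n → Prop) : Prop :=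
  ∃ Z, PAlgSet Z ∧ ¬A ⊆ Z ∧ ∀ x ∈ A, x ∉ Z → Φ x

/-- The projective linear subspace of `ℙ^n` corresponding to a linear subspace `W ⊆ ℂ^{n+1}`. -/
def projLinear {n : ℕ} (W : Submodule ℂ (Fin (n + 1) → ℂ)) : Set (P n) :=
  {x | x.submodule ≤ W}

/-- Lines in `ℙ^n`. -/
def IsLine {n : ℕ} (L : Set (P n)) : Prop :=
  ∃ W : Submodule ℂ (Fin (n + 1) → ℂ), Module.finrank ℂ W = 2 ∧ L = projLinear W

/-- `L` is a secant line of `S`: a line meeting `S` in at least two points. -/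
def IsSecantLine {n : ℕ} (L S : Set (P n)) : Prop :=
  IsLine L ∧ ∃ a ∈ L ∩ S, ∃ b ∈ L ∩ S, a ≠ b

/-- The standard degree-`d` rational normal curve parametrization vector evaluated at `t ∈ ℂ²`. -/
def rncVec (d : ℕ) (t : Fin 2 → ℂ) : Fin (d + 1) → ℂ := fun i => t 0 ^ (i : ℕ) * t 1 ^ (d - (i : ℕ))

/-- `C ⊆ ℙ^n` is a rational normal curve of degree `d` (in its span):
the image of `ℙ^1` under a rank `d+1` linear reembedding of the degree-`d` Veronese. -/
def IsRNCdeg {n : ℕ} (d : ℕ) (C : Set (P n)) : Prop :=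
  ∃ M : Matrix (Fin (n + 1)) (Fin (d + 1)) ℂ, M.rank = d + 1 ∧
    C = {x | ∃ t : Fin 2 → ℂ, ∃ h : M.mulVec (rncVec d t) ≠ 0,
          x = Projectivization.mk ℂ _ h}

/-- Conics in `ℙ^n`. -/
def IsConic {n : ℕ} (C : Set (P n)) : Prop := IsRNCdeg 2 C

/-- Twisted cubic curves in `ℙ^n`. -/
def IsTwistedCubic {n : ℕ} (C : Set (P n)) : Prop := IsRNCdeg 3 C

/-- Evaluation of polynomials at (a representative of) `x ∈ ℙ^n`, as a linear map. -/
def homEvalAt {n : ℕ} (x : P n) : MvPolynomial (Fin (n + 1)) ℂ →ₗ[ℂ] ℂ :=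
  (MvPolynomial.aeval x.rep : MvPolynomial (Fin (n + 1)) ℂ →ₐ[ℂ] ℂ).toLinearMap

/-- Iterated partial derivative along a list of coordinate directions. -/
def pderivSeq {n : ℕ} (l : List (Fin (n + 1))) :
    MvPolynomial (Fin (n + 1)) ℂ →ₗ[ℂ] MvPolynomial (Fin (n + 1)) ℂ :=
  l.foldr (fun i h => (MvPolynomial.pderiv i).comp h) LinearMap.id

/-- The linear system of degree `d` hypersurfaces of `ℙ^n` having points of multiplicity at least
`m` along `S` (for `m = 1`, hypersurfaces through `S`; for `m = 2`, double points along `S`...). -/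
def linSys {n : ℕ} (S : Set (P n)) (d m : ℕ) : Submodule ℂ (MvPolynomial (Fin (n + 1)) ℂ) :=
  (homogeneousSubmodule (Fin (n + 1)) ℂ d) ⊓
    ⨅ (x : P n) (_ : x ∈ S) (l : List (Fin (n + 1))) (_ : l.length < m),
      LinearMap.ker ((homEvalAt x).comp (pderivSeq l))

/-- A rational map `ℙ^n ⇢ ℙ^k` given by `k+1` homogeneous polynomials of common degree `d`. -/
structure RatMap (n k : ℕ) where
  d : ℕ
  g : Fin (k + 1) → MvPolynomial (Fin (n + 1)) ℂ
  homog : ∀ i, (g i).IsHomogeneous d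

/-- The (total, with junk values on the base locus) map associated to a rational map datum. -/
def RatMap.toFun {n k : ℕ} (μ : RatMap n k) (x : P n) : P k :=
  if h : (fun i => eval x.rep (μ.g i)) ≠ 0 then Projectivization.mk ℂ _ h
  else Classical.arbitrary _

/-- `μ` restricted to `A ⊆ ℙ^n` is dominant onto `B ⊆ ℙ^k`: the image of `A` is contained in no
proper algebraic subset cutting `B` properly. -/
def DominantTo {n k : ℕ} (μ : RatMap n k) (A : Set (P n)) (B : Set (P k)) : Prop :=
  μ.toFun '' A ⊆ zclosure B ∧ ∀ Z, PAlgSet Z → ¬B ⊆ Z → ¬μ.toFun '' A ⊆ Z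

/-- `μ` restricted to `A ⊆ ℙ^n` is birational onto `B ⊆ ℙ^k`: there is a rational map in the
other direction which is generically a two-sided inverse. -/
def BirationalOnto {n k : ℕ} (μ : RatMap n k) (A : Set (P n)) (B : Set (P k)) : Prop :=
  DominantTo μ A B ∧
    ∃ ν : RatMap k n,
      GenericOn A (fun x => μ.toFun x ∈ B ∧ ν.toFun (μ.toFun x) = x) ∧
      GenericOn B (fun y => ν.toFun y ∈ A ∧ μ.toFun (ν.toFun y) = y)

/-- The subvariety `A ⊆ ℙ^n` is rational. -/
def IsRationalSub {n : ℕ} (A : Set (P n)) : Prop :=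
  ∃ (k : ℕ) (ν : RatMap k n), BirationalOnto ν Set.univ A

/-- The hypersurface in `ℙ^n` cut out by a (homogeneous) polynomial. -/
def hypersurface {n : ℕ} (f : MvPolynomial (Fin (n + 1)) ℂ) : Set (P n) :=
  {x | eval x.rep f = 0}

/-- Smoothness of the hypersurface `f = 0` (Jacobian criterion on the affine cone). -/
def SmoothHypPoly {n : ℕ} (f : MvPolynomial (Fin (n + 1)) ℂ) : Prop :=
  ∀ v : Fin (n + 1) → ℂ, v ≠ 0 → ¬∀ i, eval v (pderiv i f) = 0

/-- A property `Φ` holds for a general member of the linear system `W`. -/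
def GenericInSystem {n : ℕ} (W : Submodule ℂ (MvPolynomial (Fin (n + 1)) ℂ))
    (Φ : MvPolynomial (Fin (n + 1)) ℂ → Prop) : Prop :=
  ∀ (N : ℕ) (ψ : (Fin N → ℂ) →ₗ[ℂ] MvPolynomial (Fin (n + 1)) ℂ),
    LinearMap.range ψ = W → GenericAff fun c => Φ (ψ c)


/-- Four points of `ℙ²` are in general position: no three of them lie on a line. -/
def GeneralPosition₄ (p : Fin 4 → P 2) : Prop :=
  ∀ i j k : Fin 4, i ≠ j → i ≠ k → j ≠ k →
    LinearIndependent ℂ ![(p i).rep, (p j).rep, (p k).rep]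

/-- The (closure of the) image of `ℙ²` in `ℙ⁵` under the rational map defined by a
`6`-dimensional linear system `b` of plane curves. -/
def planarImage (b : Fin 6 → MvPolynomial (Fin 3) ℂ) : Set (P 5) :=
  zclosure {y : P 5 | ∃ x : P 2, ∃ h : (fun i => MvPolynomial.eval x.rep (b i)) ≠ 0,
    y = Projectivization.mk ℂ _ h}

/-- A property `Φ` holds for a general `m`-tuple of points of the subvariety `A ⊆ ℙⁿ`. -/
def GenericTuple {n : ℕ} (m : ℕ) (A : Set (P n)) (Φ : (Fin m → P n) → Prop) : Prop :=
  ∃ g : MvPolynomial (Fin m × Fin (n + 1)) ℂ,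
    (∃ u : Fin m → {v : Fin (n + 1) → ℂ // v ≠ 0},
      (∀ j, Projectivization.mk ℂ (u j).1 (u j).2 ∈ A) ∧
      MvPolynomial.eval (fun q => (u q.1).1 q.2) g ≠ 0) ∧
    ∀ u : Fin m → {v : Fin (n + 1) → ℂ // v ≠ 0},
      (∀ j, Projectivization.mk ℂ (u j).1 (u j).2 ∈ A) →
      MvPolynomial.eval (fun q => (u q.1).1 q.2) g ≠ 0 →
      Φ fun j => Projectivization.mk ℂ (u j).1 (u j).2

/-- The affine cone over the linear span of a subset of `ℙⁿ`. -/
def spanCone {n : ℕ} (A : Set (P n)) : Submodule ℂ (Fin (n + 1) → ℂ) :=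
  ⨆ x ∈ A, x.submodule

/-- The (closure of the) image of `A ⊆ ℙⁿ` under the linear projection induced by a linear
map `f` of the underlying vector spaces (e.g. a projection from a linear center). -/
def linProjImage {n k : ℕ} (f : (Fin (n + 1) → ℂ) →ₗ[ℂ] (Fin (k + 1) → ℂ))
    (A : Set (P n)) : Set (P k) :=
  zclosure {y : P k | ∃ x ∈ A, ∃ h : f x.rep ≠ 0, y = Projectivization.mk ℂ _ h}

/-- The secant variety of `S ⊆ ℙⁿ`: the closure of the union of its secant lines. -/
def secantVariety {n : ℕ} (S : Set (P n)) : Set (P n) :=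
  zclosure {z | ∃ L, IsSecantLine L S ∧ z ∈ L}

namespace QuinticDelPezzo

/-! ### Homogeneous polynomials and genericity -/

lemma eval_smul_of_isHomogeneous {σ : Type*} {f : MvPolynomial σ ℂ} {d : ℕ}
    (hf : f.IsHomogeneous d) (a : ℂ) (v : σ → ℂ) : eval (a • v) f = a ^ d * eval v f := by
  rw [eval_eq, eval_eq, Finset.mul_sum]
  refine Finset.sum_congr rfl fun m hm => ?_
  have hdeg := hf.degree_eq_sum_deg_support hm
  simp only [Pi.smul_apply, smul_eq_mul, mul_pow, Finset.prod_mul_distrib,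
    Finset.prod_pow_eq_pow_sum]
  rw [← hdeg]
  ring

lemma eval_rep_eq_zero_iff {n d : ℕ} {f : MvPolynomial (Fin (n + 1)) ℂ} (hf : f.IsHomogeneous d)
    (v : Fin (n + 1) → ℂ) (hv : v ≠ 0) :
    eval (Projectivization.mk ℂ v hv).rep f = 0 ↔ eval v f = 0 := by
  obtain ⟨a, ha⟩ := Projectivization.exists_smul_eq_mk_rep ℂ v hv
  rw [← ha, Units.smul_def, eval_smul_of_isHomogeneous hf]
  simp

lemma exists_eval_ne_zero {σ : Type*} [Finite σ] {g : MvPolynomial σ ℂ} (hg : g ≠ 0) :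
    ∃ v, eval v g ≠ 0 := by
  by_contra! h
  exact hg (MvPolynomial.funext fun v => by simpa using h v)

lemma ne_zero_of_eval_ne_zero {σ : Type*} {g : MvPolynomial σ ℂ} {v : σ → ℂ}
    (h : eval v g ≠ 0) : g ≠ 0 := by
  rintro rfl
  simp at h

lemma genericAff_of_eval {N : ℕ} {Φ : (Fin N → ℂ) → Prop} (g : MvPolynomial (Fin N) ℂ)
    (v₀ : Fin N → ℂ) (h₀ : eval v₀ g ≠ 0) (h : ∀ v, eval v g ≠ 0 → Φ v) : GenericAff Φ :=
  ⟨g, ne_zero_of_eval_ne_zero h₀, h⟩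

lemma GenericAff.and {N : ℕ} {Φ Ψ : (Fin N → ℂ) → Prop} (hΦ : GenericAff Φ)
    (hΨ : GenericAff Ψ) : GenericAff fun v => Φ v ∧ Ψ v := by
  obtain ⟨g, hg, hgΦ⟩ := hΦ
  obtain ⟨k, hk, hkΨ⟩ := hΨ
  refine ⟨g * k, mul_ne_zero hg hk, fun v hv => ?_⟩
  rw [map_mul] at hv
  exact ⟨hgΦ v (left_ne_zero_of_mul hv), hkΨ v (right_ne_zero_of_mul hv)⟩

lemma mem_linSys_one {n d : ℕ} {S : Set (P n)} {f : MvPolynomial (Fin (n + 1)) ℂ} :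
    f ∈ linSys S d 1 ↔ f.IsHomogeneous d ∧ ∀ x ∈ S, eval x.rep f = 0 := by
  simp only [linSys, Submodule.mem_inf, mem_homogeneousSubmodule, Submodule.mem_iInf,
    LinearMap.mem_ker, LinearMap.comp_apply, Nat.lt_one_iff, List.length_eq_zero_iff]
  refine and_congr_right fun _ => forall₂_congr fun x _ => ?_
  simp [homEvalAt, pderivSeq, aeval_eq_eval]

/-- A linear functional on `ℂ^N` as a polynomial. -/
def functionalPoly {N : ℕ} (φ : (Fin N → ℂ) →ₗ[ℂ] ℂ) : MvPolynomial (Fin N) ℂ :=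
  ∑ k, C (φ (Pi.single k 1)) * X k

@[simp]
lemma eval_functionalPoly {N : ℕ} (φ : (Fin N → ℂ) →ₗ[ℂ] ℂ) (v : Fin N → ℂ) :
    eval v (functionalPoly φ) = φ v := by
  conv_rhs => rw [pi_eq_sum_univ' v, map_sum]
  simp [functionalPoly, mul_comm]

lemma isHomogeneous_functionalPoly {N : ℕ} (φ : (Fin N → ℂ) →ₗ[ℂ] ℂ) :
    (functionalPoly φ).IsHomogeneous 1 :=
  IsHomogeneous.sum _ _ _ fun _ _ => isHomogeneous_C_mul_X _ _

/-- Pullback of polynomials along a linear map. -/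
def pullback {m n : ℕ} (E : (Fin m → ℂ) →ₗ[ℂ] (Fin n → ℂ)) :
    MvPolynomial (Fin n) ℂ →ₐ[ℂ] MvPolynomial (Fin m) ℂ :=
  aeval fun i => functionalPoly (LinearMap.proj i ∘ₗ E)

lemma eval_aeval {σ τ : Type*} (g : σ → MvPolynomial τ ℂ) (f : MvPolynomial σ ℂ) (v : τ → ℂ) :
    eval v (aeval g f) = eval (fun i => eval v (g i)) f := by
  induction f using MvPolynomial.induction_on with
  | C a => simp
  | add p q hp hq => simp only [map_add, hp, hq]
  | mul_X p i hp => simp only [map_mul, aeval_X, eval_X, hp]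

@[simp]
lemma eval_pullback {m n : ℕ} (E : (Fin m → ℂ) →ₗ[ℂ] (Fin n → ℂ)) (f : MvPolynomial (Fin n) ℂ)
    (v : Fin m → ℂ) : eval v (pullback E f) = eval (E v) f := by
  rw [pullback, eval_aeval]
  congr 2
  ext i
  simp

lemma isHomogeneous_pullback {m n d : ℕ} (E : (Fin m → ℂ) →ₗ[ℂ] (Fin n → ℂ))
    {f : MvPolynomial (Fin n) ℂ} (hf : f.IsHomogeneous d) : (pullback E f).IsHomogeneous d := by
  have h := hf.aeval (fun i => functionalPoly (LinearMap.proj i ∘ₗ E))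
    fun i => isHomogeneous_functionalPoly _
  rwa [one_mul] at h

lemma eval_pderiv_pullback {m n : ℕ} (E : (Fin m → ℂ) →ₗ[ℂ] (Fin n → ℂ))
    (f : MvPolynomial (Fin n) ℂ) (i : Fin m) (v : Fin m → ℂ) :
    eval v (pderiv i (pullback E f)) =
      ∑ k, E (Pi.single i 1) k * eval (E v) (pderiv k f) := by
  induction f using MvPolynomial.induction_on with
  | C a => simp [pullback]
  | add p q hp hq => simp only [map_add, hp, hq, mul_add, Finset.sum_add_distrib]
  | mul_X p j hp =>
    have hX : eval v (pderiv i (pullback E (X j))) = E (Pi.single i 1) j := by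
      simp [pullback, functionalPoly, pderiv_X, Pi.single_apply]
    simp only [map_mul, Derivation.leibniz, smul_eq_mul, map_add, hX, hp, eval_pullback, eval_X,
      mul_add, Finset.sum_add_distrib, pderiv_X, Pi.single_apply]
    congr 1
    · simp [mul_comm]
    · rw [Finset.mul_sum]
      exact Finset.sum_congr rfl fun k _ => by ring

/-! ### The pentagonal model of the quintic del Pezzo surface

The surface is cut out by `x_{j-1} x_{j+1} = x_0 x_j + x_0 ^ 2`, for `j` modulo `5`, where the
coordinates on `ℙ⁵` are `x_0` and `x_1, …, x_5`, the latter read cyclically. -/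

section Model

variable {R : Type*} [CommRing R]

/-- The five quadrics defining the model. -/
def quad (x : Fin 6 → R) : Fin 5 → R :=
  ![x 5 * x 2 - x 0 * x 1 - x 0 ^ 2, x 1 * x 3 - x 0 * x 2 - x 0 ^ 2,
    x 2 * x 4 - x 0 * x 3 - x 0 ^ 2, x 3 * x 5 - x 0 * x 4 - x 0 ^ 2,
    x 4 * x 1 - x 0 * x 5 - x 0 ^ 2]

/-- The linear syzygies between the five quadrics, as bilinear forms. -/
def syz (x : Fin 6 → R) (y : Fin 5 → R) : Fin 5 → R :=
  ![y 4 * x 3 - y 1 * x 4 + (y 3 - y 2) * x 0, y 0 * x 4 - y 2 * x 5 + (y 4 - y 3) * x 0,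
    y 1 * x 5 - y 3 * x 1 + (y 0 - y 4) * x 0, y 2 * x 1 - y 4 * x 2 + (y 1 - y 0) * x 0,
    y 3 * x 2 - y 0 * x 3 + (y 2 - y 1) * x 0]

/-- The product of the coordinates. -/
def coordProd (y : Fin 5 → R) : R := y 0 * y 1 * y 2 * y 3 * y 4

/-- The trace of the quadratic form cutting out the surface on a secant line. -/
def secTrace (y : Fin 5 → R) : R :=
  y 0 * y 2 + y 1 * y 3 + y 2 * y 4 + y 3 * y 0 + y 4 * y 1

/-- The norm of the quadratic form cutting out the surface on a secant line. -/
def secNorm (y : Fin 5 → R) : R :=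
  y 0 ^ 2 * y 2 * y 3 + y 1 ^ 2 * y 3 * y 4 + y 2 ^ 2 * y 4 * y 0 + y 3 ^ 2 * y 0 * y 1 +
    y 4 ^ 2 * y 1 * y 2

/-- The quadratic form cutting out the surface on the secant line with parameter `y`. -/
def secForm (y : Fin 5 → R) (s t : R) : R :=
  t ^ 2 - secTrace y * t * s + secNorm y * s ^ 2

/-- The discriminant of `secForm`. -/
def secDisc (y : Fin 5 → R) : R := secTrace y ^ 2 - 4 * secNorm y

/-- The point at infinity of the secant line with parameter `y`. -/
def secB (y : Fin 5 → R) : Fin 6 → R :=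
  ![0, y 0 * y 1 * y 4, y 1 * y 2 * y 0, y 2 * y 3 * y 1, y 3 * y 4 * y 2, y 4 * y 0 * y 3]

/-- A second point of the secant line with parameter `y`. -/
def secA (y : Fin 5 → R) : Fin 6 → R :=
  ![y 0 * y 1 * y 2 * y 3 * y 4,
    -(y 0 * y 1 * y 4 * (y 1 * y 3 + y 2 * y 4)), -(y 1 * y 2 * y 0 * (y 2 * y 4 + y 3 * y 0)),
    -(y 2 * y 3 * y 1 * (y 3 * y 0 + y 4 * y 1)), -(y 3 * y 4 * y 2 * (y 4 * y 1 + y 0 * y 2)),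
    -(y 4 * y 0 * y 3 * (y 0 * y 2 + y 1 * y 3))]

lemma syz_quad (x : Fin 6 → R) : syz x (quad x) = 0 := by
  ext i
  fin_cases i <;> simp [syz, quad] <;> ring

lemma syz_add (x x' : Fin 6 → R) (y : Fin 5 → R) : syz (x + x') y = syz x y + syz x' y := by
  ext i
  fin_cases i <;> simp [syz] <;> ring

lemma syz_smul (a : R) (x : Fin 6 → R) (y : Fin 5 → R) : syz (a • x) y = a • syz x y := by
  ext i
  fin_cases i <;> simp [syz] <;> ring

lemma syz_smul_right (a : R) (x : Fin 6 → R) (y : Fin 5 → R) : syz x (a • y) = a • syz x y := by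
  ext i
  fin_cases i <;> simp [syz] <;> ring

lemma quad_smul (a : R) (x : Fin 6 → R) : quad (a • x) = a ^ 2 • quad x := by
  ext i
  fin_cases i <;> simp [quad] <;> ring

lemma quad_secant (y : Fin 5 → R) (s t : R) :
    quad (s • secA y + t • secB y) = (coordProd y * secForm y s t) • y := by
  ext i
  fin_cases i <;> simp [quad, secA, secB, coordProd, secForm, secTrace, secNorm] <;> ring

/-- The polar form of the quadrics. -/
def polar (a b : Fin 6 → R) : Fin 5 → R := quad (a + b) - quad a - quad b

lemma quad_linComb (a b : Fin 6 → R) (s t : R) :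
    quad (s • a + t • b) = s ^ 2 • quad a + t ^ 2 • quad b + (s * t) • polar a b := by
  ext i
  fin_cases i <;> simp [quad, polar] <;> ring

end Model

lemma coordProd_ne_zero {y : Fin 5 → ℂ} (h : coordProd y ≠ 0) (i : Fin 5) : y i ≠ 0 := by
  intro hi
  apply h
  fin_cases i <;> simp_all [coordProd]

lemma exists_secant_of_syz {y : Fin 5 → ℂ} (hy : coordProd y ≠ 0) {x : Fin 6 → ℂ}
    (h : syz x y = 0) : ∃ s t : ℂ, x = s • secA y + t • secB y := by
  have h0 := coordProd_ne_zero hy 0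
  have h1 := coordProd_ne_zero hy 1
  have h2 := coordProd_ne_zero hy 2
  have h3 := coordProd_ne_zero hy 3
  have h4 := coordProd_ne_zero hy 4
  have e2 := congrFun h 2
  have e3 := congrFun h 3
  have e4 := congrFun h 4
  have e0 := congrFun h 0
  simp only [syz, Matrix.cons_val, Pi.zero_apply] at e0 e2 e3 e4
  set s := x 0 / (y 0 * y 1 * y 2 * y 3 * y 4) with hs
  set t := x 1 / (y 0 * y 1 * y 4) + s * (y 1 * y 3 + y 2 * y 4) with ht
  have hx0 : x 0 = s * (y 0 * y 1 * y 2 * y 3 * y 4) := by rw [hs]; field_simp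
  have hx1 : x 1 = (t - s * (y 1 * y 3 + y 2 * y 4)) * (y 0 * y 1 * y 4) := by
    rw [ht]; field_simp; ring
  clear_value s t
  have hx2 : x 2 = (t - s * (y 2 * y 4 + y 3 * y 0)) * (y 1 * y 2 * y 0) := by
    apply mul_left_cancel₀ h4
    rw [hx0, hx1] at e3
    linear_combination -e3
  have hx3 : x 3 = (t - s * (y 3 * y 0 + y 4 * y 1)) * (y 2 * y 3 * y 1) := by
    apply mul_left_cancel₀ h0
    rw [hx0, hx2] at e4
    linear_combination -e4
  have hx4 : x 4 = (t - s * (y 4 * y 1 + y 0 * y 2)) * (y 3 * y 4 * y 2) := by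
    apply mul_left_cancel₀ h1
    rw [hx0, hx3] at e0
    linear_combination -e0
  have hx5 : x 5 = (t - s * (y 0 * y 2 + y 1 * y 3)) * (y 4 * y 0 * y 3) := by
    apply mul_left_cancel₀ h1
    rw [hx0, hx1] at e2
    linear_combination e2
  refine ⟨s, t, ?_⟩
  ext i
  fin_cases i <;> simp [secA, secB]
  · exact hx0
  · rw [hx1]; ring
  · rw [hx2]; ring
  · rw [hx3]; ring
  · rw [hx4]; ring
  · rw [hx5]; ring

lemma syz_eq_zero_of_quad_eq_smul {x : Fin 6 → ℂ} {y : Fin 5 → ℂ} {c : ℂ} (hc : c ≠ 0)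
    (h : quad x = c • y) : syz x y = 0 := by
  have := syz_quad x
  rw [h, syz_smul_right] at this
  exact (smul_eq_zero.mp this).resolve_left hc

lemma linearIndependent_secant {y : Fin 5 → ℂ} (hy : coordProd y ≠ 0) :
    LinearIndependent ℂ ![secA y, secB y] := by
  rw [LinearIndependent.pair_iff]
  intro s t h
  have h0 := congrFun h 0
  have h1 := congrFun h 1
  have hs : s = 0 := by simpa [secA, secB, coordProd_ne_zero hy] using h0
  subst hs
  simpa [secA, secB, coordProd_ne_zero hy] using h1

lemma map_quad {R T : Type*} [CommRing R] [CommRing T] (φ : R →+* T) (x : Fin 6 → R) (i : Fin 5) :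
    φ (quad x i) = quad (fun k => φ (x k)) i := by
  fin_cases i <;> simp [quad]

@[simp]
lemma eval_quad_X (v : Fin 6 → ℂ) (i : Fin 5) :
    eval v (quad (X : Fin 6 → MvPolynomial (Fin 6) ℂ) i) = quad v i := by
  simp [map_quad]

lemma isHomogeneous_quad {N d : ℕ} {x : Fin 6 → MvPolynomial (Fin N) ℂ}
    (hx : ∀ k, (x k).IsHomogeneous d) (i : Fin 5) : (quad x i).IsHomogeneous (d + d) := by
  have h (a b c e : Fin 6) : (x a * x b - x c * x e - x c ^ 2).IsHomogeneous (d + d) :=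
    (((hx a).mul (hx b)).sub ((hx c).mul (hx e))).sub (by rw [sq]; exact (hx c).mul (hx c))
  fin_cases i <;> exact h _ _ _ _

/-! ### The parametrization of the model by plane cubics -/

section Chart

variable {R : Type*} [CommRing R]

/-- Six plane cubics through the points `(1, 0, 0)`, `(0, 1, 0)`, `(0, -1, 1)`, `(-1, 0, 1)`. -/
def planeCubic (u : Fin 3 → R) : Fin 6 → R :=
  ![u 0 * u 1 * u 2, u 0 ^ 2 * u 1, u 0 * u 1 ^ 2, u 1 * u 2 * (u 1 + u 2),
    u 2 ^ 2 * (u 0 + u 1 + u 2), u 0 * u 2 * (u 0 + u 2)]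

/-- The cyclic symmetry of the model. -/
def rot {R : Type*} (x : Fin 6 → R) : Fin 6 → R := fun k => x (![0, 2, 3, 4, 5, 1] k)

lemma planeCubic_smul (a : R) (u : Fin 3 → R) : planeCubic (a • u) = a ^ 3 • planeCubic u := by
  ext k
  fin_cases k <;> simp [planeCubic] <;> ring

lemma quad_planeCubic (u : Fin 3 → R) : quad (planeCubic u) = 0 := by
  ext k
  fin_cases k <;> simp [quad, planeCubic] <;> ring

lemma map_planeCubic {T : Type*} [CommRing T] (φ : R →+* T) (u : Fin 3 → R) (k : Fin 6) :
    φ (planeCubic u k) = planeCubic (fun j => φ (u j)) k := by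
  fin_cases k <;> simp [planeCubic]

lemma map_rot {T : Type*} [CommRing T] (φ : R →+* T) (x : Fin 6 → R) (k : Fin 6) :
    φ (rot x k) = rot (fun j => φ (x j)) k := rfl

lemma rot_iterate_five {R : Type*} (x : Fin 6 → R) : rot^[5] x = x := by
  have h : ∀ k : Fin 6, (![0, 2, 3, 4, 5, 1] : Fin 6 → Fin 6) (![0, 2, 3, 4, 5, 1]
      (![0, 2, 3, 4, 5, 1] (![0, 2, 3, 4, 5, 1] (![0, 2, 3, 4, 5, 1] k)))) = k := by decide
  ext k
  exact congrArg x (h k)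

lemma quad_rot (x : Fin 6 → R) :
    quad (rot x) = ![quad x 1, quad x 2, quad x 3, quad x 4, quad x 0] := by
  ext k
  fin_cases k <;> simp [quad, rot, mul_comm]

lemma quad_rot_eq_zero {x : Fin 6 → R} (h : quad x = 0) : quad (rot x) = 0 := by
  rw [quad_rot, h]
  ext k
  fin_cases k <;> rfl

lemma quad_rot_iterate_eq_zero {x : Fin 6 → R} (h : quad x = 0) (k : ℕ) :
    quad (rot^[k] x) = 0 := by
  induction k with
  | zero => exact h
  | succ k ih => rw [Function.iterate_succ_apply']; exact quad_rot_eq_zero ih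

lemma planeCubic_of_quad_eq_zero {x : Fin 6 → R} (h : quad x = 0) :
    (x 0 ^ 3) • planeCubic ![x 1, x 2, x 0] = (x 0 ^ 3 * x 1 * x 2) • x := by
  have h0 := congrFun h 0
  have h1 := congrFun h 1
  have h2 := congrFun h 2
  have h3 := congrFun h 3
  have h4 := congrFun h 4
  simp only [quad, Matrix.cons_val, Pi.zero_apply] at h0 h1 h2 h3 h4
  ext k
  fin_cases k <;> simp [planeCubic]
  · ring
  · ring
  · ring
  · linear_combination -(x 0 ^ 3 * x 2) * h1
  · linear_combination -(x 0 ^ 3 * x 1) * h2 - (x 0 ^ 4) * h1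
  · linear_combination -(x 0 ^ 3 * x 1) * h0

/-- The cyclic symmetry, acting on polynomials. -/
def rotPoly (f : MvPolynomial (Fin 6) ℂ) : MvPolynomial (Fin 6) ℂ := aeval (rot X) f

lemma eval_rotPoly (f : MvPolynomial (Fin 6) ℂ) (x : Fin 6 → ℂ) :
    eval x (rotPoly f) = eval (rot x) f := by
  rw [rotPoly, eval_aeval]
  simp [map_rot]

lemma eval_rotPoly_iterate (f : MvPolynomial (Fin 6) ℂ) (k : ℕ) (x : Fin 6 → ℂ) :
    eval x (rotPoly^[k] f) = eval (rot^[k] x) f := by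
  induction k generalizing x with
  | zero => rfl
  | succ k ih => rw [Function.iterate_succ_apply', Function.iterate_succ_apply, eval_rotPoly, ih]

lemma isHomogeneous_rotPoly {d : ℕ} {f : MvPolynomial (Fin 6) ℂ} (hf : f.IsHomogeneous d) :
    (rotPoly f).IsHomogeneous d := by
  have h := hf.aeval (rot X) fun i => isHomogeneous_X ℂ _
  rwa [one_mul] at h

end Chart

/-- A polynomial vanishing wherever some nonzero polynomial does not vanish is zero. -/
lemma eq_zero_of_eval_eq_zero {N : ℕ} {G H : MvPolynomial (Fin N) ℂ} (hH : H ≠ 0)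
    (h : ∀ u, eval u H ≠ 0 → eval u G = 0) : G = 0 := by
  by_contra hG
  obtain ⟨u, hu⟩ := exists_eval_ne_zero (mul_ne_zero hG hH)
  rw [map_mul] at hu
  exact left_ne_zero_of_mul hu (h u (right_ne_zero_of_mul hu))

lemma eval_eq_zero_of_planeCubic {d : ℕ} {f : MvPolynomial (Fin 6) ℂ} (hf : f.IsHomogeneous d)
    (hV : ∀ u, eval (planeCubic u) f = 0) {x : Fin 6 → ℂ} (hx : quad x = 0)
    (h0 : x 0 ≠ 0) (h1 : x 1 ≠ 0) (h2 : x 2 ≠ 0) : eval x f = 0 := by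
  have h := planeCubic_of_quad_eq_zero hx
  have e := eval_smul_of_isHomogeneous hf (x 0 ^ 3) (planeCubic ![x 1, x 2, x 0])
  rw [h, hV, eval_smul_of_isHomogeneous hf, mul_zero] at e
  exact (mul_eq_zero.mp e).resolve_left (by positivity)

lemma eval_planeCubic_rotPoly {d : ℕ} {f : MvPolynomial (Fin 6) ℂ} (hf : f.IsHomogeneous d)
    (hV : ∀ u, eval (planeCubic u) f = 0) (u : Fin 3 → ℂ) :
    eval (planeCubic u) (rotPoly f) = 0 := by
  have hG : aeval (planeCubic (X : Fin 3 → MvPolynomial (Fin 3) ℂ)) (rotPoly f) = 0 := by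
    refine eq_zero_of_eval_eq_zero (H := planeCubic X 0 * planeCubic X 2 * planeCubic X 3)
      (ne_zero_of_eval_ne_zero (v := fun _ => 1) ?_) fun u hu => ?_
    · simp [planeCubic]
    · rw [eval_aeval, eval_rotPoly]
      simp only [map_mul, map_planeCubic, eval_X] at hu ⊢
      refine eval_eq_zero_of_planeCubic hf hV (quad_rot_eq_zero (quad_planeCubic u)) ?_ ?_ ?_ <;>
        · intro h
          simp only [rot, Matrix.cons_val] at h
          simp [h] at hu
  have := congrArg (eval u) hG
  rw [eval_aeval] at this
  simpa [map_planeCubic] using this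

lemma eval_edge_eq_zero {d : ℕ} {f : MvPolynomial (Fin 6) ℂ} (hf : f.IsHomogeneous d)
    (hV : ∀ u, eval (planeCubic u) f = 0) (a b : ℂ) : eval ![0, a, b, 0, 0, 0] f = 0 := by
  have hG : aeval (![0, X 0, X 1, 0, 0, 0] : Fin 6 → MvPolynomial (Fin 2) ℂ) f = 0 := by
    refine eq_zero_of_eval_eq_zero (H := X 0 * X 1)
      (ne_zero_of_eval_ne_zero (v := fun _ => 1) (by simp)) fun u hu => ?_
    have e := hV ![u 0, u 1, 0]
    have : planeCubic ![u 0, u 1, 0] = (u 0 * u 1) • ![0, u 0, u 1, 0, 0, 0] := by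
      ext k
      fin_cases k <;> simp [planeCubic] <;> ring
    rw [this, eval_smul_of_isHomogeneous hf] at e
    rw [eval_aeval]
    simp only [map_mul, eval_X] at hu
    refine Eq.trans ?_ ((mul_eq_zero.mp e).resolve_left (pow_ne_zero _ hu))
    congr 2
    funext k
    fin_cases k <;> simp
  have := congrArg (eval ![a, b]) hG
  rw [eval_aeval, map_zero] at this
  refine Eq.trans ?_ this
  congr 2
  funext k
  fin_cases k <;> simp

/-- A form vanishing on the image of `planeCubic` vanishes on the common zeros of the quadrics. -/
lemma eval_eq_zero_of_quad_eq_zero {d : ℕ} {f : MvPolynomial (Fin 6) ℂ} (hf : f.IsHomogeneous d)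
    (h : ∀ u, planeCubic u ≠ 0 → eval (planeCubic u) f = 0) {x : Fin 6 → ℂ} (hx : quad x = 0) :
    eval x f = 0 := by
  have hV : ∀ u, eval (planeCubic u) f = 0 := by
    have hG : aeval (planeCubic (X : Fin 3 → MvPolynomial (Fin 3) ℂ)) f = 0 := by
      refine eq_zero_of_eval_eq_zero (H := planeCubic X 0)
        (ne_zero_of_eval_ne_zero (v := fun _ => 1) ?_) fun u hu => ?_
      · simp [planeCubic]
      · rw [eval_aeval]
        simp only [map_planeCubic, eval_X] at hu ⊢
        exact h u fun h0 => hu (by rw [h0]; rfl)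
    intro u
    have := congrArg (eval u) hG
    rw [eval_aeval] at this
    simpa [map_planeCubic] using this
  have hrot : ∀ k, (rotPoly^[k] f).IsHomogeneous d ∧
      ∀ u, eval (planeCubic u) (rotPoly^[k] f) = 0 := by
    intro k
    induction k with
    | zero => exact ⟨hf, hV⟩
    | succ k ih =>
      rw [Function.iterate_succ_apply']
      exact ⟨isHomogeneous_rotPoly ih.1, eval_planeCubic_rotPoly ih.1 ih.2⟩
  have key : ∀ k l, l + k = 5 →
      eval (rot^[k] x) (rotPoly^[l] f) = 0 → eval x f = 0 := by
    intro k l hkl e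
    rwa [eval_rotPoly_iterate, ← Function.iterate_add_apply, hkl, rot_iterate_five] at e
  have interior : ∀ k l, l + k = 5 → (rot^[k] x) 0 ≠ 0 → (rot^[k] x) 1 ≠ 0 →
      (rot^[k] x) 2 ≠ 0 → eval x f = 0 := fun k l hkl h0 h1 h2 =>
    key k l hkl (eval_eq_zero_of_planeCubic (hrot l).1 (hrot l).2
      (quad_rot_iterate_eq_zero hx k) h0 h1 h2)
  have boundary : ∀ k l a b, l + k = 5 → rot^[k] x = ![0, a, b, 0, 0, 0] → eval x f = 0 :=
    fun k l a b hkl e => key k l hkl (by rw [e]; exact eval_edge_eq_zero (hrot l).1 (hrot l).2 a b)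
  have q0 := congrFun hx 0
  have q1 := congrFun hx 1
  have q2 := congrFun hx 2
  have q3 := congrFun hx 3
  have q4 := congrFun hx 4
  simp only [quad, Matrix.cons_val, Pi.zero_apply] at q0 q1 q2 q3 q4
  by_cases h0 : x 0 = 0
  · have hedge : ∀ v w : Fin 6 → ℂ, v 0 = w 0 → v 1 = w 1 → v 2 = w 2 → v 3 = w 3 → v 4 = w 4 →
        v 5 = w 5 → v = w := by
      intro v w _ _ _ _ _ _
      ext k
      fin_cases k <;> assumption
    simp only [h0, zero_mul, ne_eq, OfNat.ofNat_ne_zero, not_false_eq_true, zero_pow, sub_zero,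
      mul_eq_zero] at q0 q1 q2 q3 q4
    have hcases : (x 3 = 0 ∧ x 4 = 0 ∧ x 5 = 0) ∨ (x 4 = 0 ∧ x 5 = 0 ∧ x 1 = 0) ∨
        (x 5 = 0 ∧ x 1 = 0 ∧ x 2 = 0) ∨ (x 1 = 0 ∧ x 2 = 0 ∧ x 3 = 0) ∨
        (x 2 = 0 ∧ x 3 = 0 ∧ x 4 = 0) := by tauto
    rcases hcases with h | h | h | h | h
    · exact boundary 0 5 (x 1) (x 2) rfl (hedge _ _ (by simp [h0]) (by simp) (by simp)
        (by simp [h]) (by simp [h]) (by simp [h]))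
    · refine boundary 1 4 (x 2) (x 3) rfl (hedge _ _ ?_ ?_ ?_ ?_ ?_ ?_) <;> simp [rot, h0, h]
    · refine boundary 2 3 (x 3) (x 4) rfl (hedge _ _ ?_ ?_ ?_ ?_ ?_ ?_) <;> simp [rot, h0, h]
    · refine boundary 3 2 (x 4) (x 5) rfl (hedge _ _ ?_ ?_ ?_ ?_ ?_ ?_) <;> simp [rot, h0, h]
    · refine boundary 4 1 (x 5) (x 1) rfl (hedge _ _ ?_ ?_ ?_ ?_ ?_ ?_) <;> simp [rot, h0, h]
  · have h00 : x 0 ^ 2 ≠ 0 := pow_ne_zero _ h0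
    have n1 : x 1 = 0 → x 2 ≠ 0 := fun e e' => h00 (by rw [e, e'] at q0; linear_combination -q0)
    have n2 : x 2 = 0 → x 3 ≠ 0 := fun e e' => h00 (by rw [e, e'] at q1; linear_combination -q1)
    have n3 : x 3 = 0 → x 4 ≠ 0 := fun e e' => h00 (by rw [e, e'] at q2; linear_combination -q2)
    have n4 : x 4 = 0 → x 5 ≠ 0 := fun e e' => h00 (by rw [e, e'] at q3; linear_combination -q3)
    have n5 : x 5 = 0 → x 1 ≠ 0 := fun e e' => h00 (by rw [e, e'] at q4; linear_combination -q4)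
    have hcases : (x 1 ≠ 0 ∧ x 2 ≠ 0) ∨ (x 2 ≠ 0 ∧ x 3 ≠ 0) ∨ (x 3 ≠ 0 ∧ x 4 ≠ 0) ∨
        (x 4 ≠ 0 ∧ x 5 ≠ 0) ∨ (x 5 ≠ 0 ∧ x 1 ≠ 0) := by tauto
    rcases hcases with h | h | h | h | h
    · exact interior 0 5 rfl h0 h.1 h.2
    · exact interior 1 4 rfl h0 h.1 h.2
    · exact interior 2 3 rfl h0 h.1 h.2
    · exact interior 3 2 rfl h0 h.1 h.2
    · exact interior 4 1 rfl h0 h.1 h.2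

/-! ### Expansions of forms of low degree -/

lemma exists_euler {N d : ℕ} {f : MvPolynomial (Fin N) ℂ} (hf : f.IsHomogeneous (d + 1)) :
    ∃ g : Fin N → MvPolynomial (Fin N) ℂ, (∀ i, (g i).IsHomogeneous d) ∧
      ∀ x, eval x f = ∑ i, x i * eval x (g i) := by
  refine ⟨fun i => C ((d + 1 : ℂ)⁻¹) * pderiv i f, fun i => ?_, fun x => ?_⟩
  · have h : (pderiv i f).IsHomogeneous d := hf.pderiv
    simpa using (isHomogeneous_C (Fin N) ((d + 1 : ℂ)⁻¹)).mul h
  · have h := congrArg (eval x) hf.sum_X_mul_pderiv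
    have hd : (d + 1 : ℂ) ≠ 0 := by exact_mod_cast d.succ_ne_zero
    simp only [map_sum, map_mul, eval_X, nsmul_eq_mul, eval_C, map_natCast, Nat.cast_add,
      Nat.cast_one, map_add, map_one] at h ⊢
    apply mul_left_cancel₀ hd
    rw [← h, Finset.mul_sum]
    refine Finset.sum_congr rfl fun i _ => ?_
    field_simp

lemma exists_linear_expansion {N : ℕ} {f : MvPolynomial (Fin N) ℂ} (hf : f.IsHomogeneous 1) :
    ∃ c : Fin N → ℂ, ∀ x, eval x f = ∑ i, x i * c i := by
  obtain ⟨g, hg, h⟩ := exists_euler hf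
  refine ⟨fun i => eval 0 (g i), fun x => ?_⟩
  rw [h]
  refine Finset.sum_congr rfl fun i _ => ?_
  have := eval_smul_of_isHomogeneous (hg i) 0 x
  rw [zero_smul, pow_zero, one_mul] at this
  simp only [this]

lemma exists_quadratic_expansion {N : ℕ} {f : MvPolynomial (Fin N) ℂ} (hf : f.IsHomogeneous 2) :
    ∃ T : Fin N → Fin N → ℂ, ∀ x, eval x f = ∑ i, x i * ∑ j, x j * T i j := by
  obtain ⟨g, hg, h⟩ := exists_euler hf
  choose T hT using fun i => exists_linear_expansion (hg i)
  exact ⟨T, fun x => by simp only [h, hT]⟩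

lemma eval_linComb_of_linear {N : ℕ} {f : MvPolynomial (Fin N) ℂ} (hf : f.IsHomogeneous 1)
    (a b : Fin N → ℂ) (s t : ℂ) : eval (s • a + t • b) f = s * eval a f + t * eval b f := by
  obtain ⟨c, hc⟩ := exists_linear_expansion hf
  simp only [hc, Finset.mul_sum, ← Finset.sum_add_distrib]
  refine Finset.sum_congr rfl fun i _ => ?_
  simp
  ring

lemma exists_eval_linComb_of_quadratic {N : ℕ} {f : MvPolynomial (Fin N) ℂ}
    (hf : f.IsHomogeneous 2) (a b : Fin N → ℂ) :
    ∃ c : ℂ, ∀ s t, eval (s • a + t • b) f = s ^ 2 * eval a f + s * t * c + t ^ 2 * eval b f := by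
  obtain ⟨g, hg, h⟩ := exists_euler hf
  refine ⟨∑ i, (a i * eval b (g i) + b i * eval a (g i)), fun s t => ?_⟩
  rw [h, h a, h b]
  simp only [eval_linComb_of_linear (hg _), Finset.mul_sum, ← Finset.sum_add_distrib]
  refine Finset.sum_congr rfl fun i _ => ?_
  simp
  ring

lemma exists_eval_linComb_of_cubic {N : ℕ} {f : MvPolynomial (Fin N) ℂ}
    (hf : f.IsHomogeneous 3) (a b : Fin N → ℂ) :
    ∃ c e : ℂ, ∀ s t, eval (s • a + t • b) f =
      s ^ 3 * eval a f + s ^ 2 * t * c + s * t ^ 2 * e + t ^ 3 * eval b f := by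
  obtain ⟨g, hg, h⟩ := exists_euler hf
  choose m hm using fun i => exists_eval_linComb_of_quadratic (hg i) a b
  refine ⟨∑ i, (a i * m i + b i * eval a (g i)), ∑ i, (a i * eval b (g i) + b i * m i),
    fun s t => ?_⟩
  rw [h, h a, h b]
  simp only [hm, Finset.mul_sum, ← Finset.sum_add_distrib]
  refine Finset.sum_congr rfl fun i _ => ?_
  simp
  ring

/-! ### The quadrics through the model -/

lemma exists_eq_sum_quad {f : MvPolynomial (Fin 6) ℂ} (hf : f.IsHomogeneous 2)
    (h : ∀ x, quad x = 0 → eval x f = 0) :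
    ∃ c : Fin 5 → ℂ, f = ∑ j, c j • quad X j := by
  obtain ⟨T, hT⟩ := exists_quadratic_expansion hf
  have hpt : ∀ a b c d e g : ℂ, e * b = g * a + g ^ 2 → a * c = g * b + g ^ 2 →
      b * d = g * c + g ^ 2 → c * e = g * d + g ^ 2 → d * a = g * e + g ^ 2 →
      g * (g * T 0 0 + a * T 0 1 + b * T 0 2 + c * T 0 3 + d * T 0 4 + e * T 0 5) +
        a * (g * T 1 0 + a * T 1 1 + b * T 1 2 + c * T 1 3 + d * T 1 4 + e * T 1 5) +
        b * (g * T 2 0 + a * T 2 1 + b * T 2 2 + c * T 2 3 + d * T 2 4 + e * T 2 5) +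
        c * (g * T 3 0 + a * T 3 1 + b * T 3 2 + c * T 3 3 + d * T 3 4 + e * T 3 5) +
        d * (g * T 4 0 + a * T 4 1 + b * T 4 2 + c * T 4 3 + d * T 4 4 + e * T 4 5) +
        e * (g * T 5 0 + a * T 5 1 + b * T 5 2 + c * T 5 3 + d * T 5 4 + e * T 5 5) = 0 := by
    intro a b c d e g h0 h1 h2 h3 h4
    have key := h ![g, a, b, c, d, e]
    rw [hT] at key
    simp only [Fin.sum_univ_six, Matrix.cons_val] at key
    apply key
    ext k
    fin_cases k <;> simp [quad]
    · linear_combination h0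
    · linear_combination h1
    · linear_combination h2
    · linear_combination h3
    · linear_combination h4
  have e1 := hpt 1 0 0 0 0 0
  have e2 := hpt 0 1 0 0 0 0
  have e3 := hpt 0 0 1 0 0 0
  have e4 := hpt 0 0 0 1 0 0
  have e5 := hpt 0 0 0 0 1 0
  have e12 := hpt 1 1 0 0 0 0
  have e23 := hpt 0 1 1 0 0 0
  have e34 := hpt 0 0 1 1 0 0
  have e45 := hpt 0 0 0 1 1 0
  have e51 := hpt 1 0 0 0 1 0
  have f1 := hpt (-1) (-1) 0 (-1) 0 1
  have f2 := hpt 0 (-1) (-1) 0 (-1) 1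
  have f3 := hpt (-1) 0 (-1) (-1) 0 1
  have f4 := hpt 0 (-1) 0 (-1) (-1) 1
  have f5 := hpt (-1) 0 (-1) 0 (-1) 1
  have f6 := hpt 1 1 2 3 2 1
  clear hpt
  norm_num at e1 e2 e3 e4 e5 e12 e23 e34 e45 e51 f1 f2 f3 f4 f5 f6
  refine ⟨![T 5 2 + T 2 5, T 1 3 + T 3 1, T 2 4 + T 4 2, T 3 5 + T 5 3, T 4 1 + T 1 4], ?_⟩
  refine MvPolynomial.funext fun x => ?_
  rw [hT]
  simp only [Fin.sum_univ_five, Fin.sum_univ_six, map_add, map_sub, map_mul, map_pow,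
    eval_X, smul_eval, quad, Matrix.cons_val]
  have a0 : T 0 0 + (T 5 2 + T 2 5) + (T 1 3 + T 3 1) + (T 2 4 + T 4 2) + (T 3 5 + T 5 3) +
    (T 4 1 + T 1 4) = 0 := by grind
  have a1 : T 0 1 + T 1 0 + (T 5 2 + T 2 5) = 0 := by grind
  have a2 : T 0 2 + T 2 0 + (T 1 3 + T 3 1) = 0 := by grind
  have a3 : T 0 3 + T 3 0 + (T 2 4 + T 4 2) = 0 := by grind
  have a4 : T 0 4 + T 4 0 + (T 3 5 + T 5 3) = 0 := by grind
  have a5 : T 0 5 + T 5 0 + (T 4 1 + T 1 4) = 0 := by grind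
  linear_combination x 0 ^ 2 * a0 + x 0 * x 1 * a1 + x 0 * x 2 * a2 + x 0 * x 3 * a3 +
    x 0 * x 4 * a4 + x 0 * x 5 * a5 + x 1 ^ 2 * e1 + x 2 ^ 2 * e2 + x 3 ^ 2 * e3 + x 4 ^ 2 * e4 +
    x 5 ^ 2 * e5 + x 1 * x 2 * (e12 - e1 - e2) + x 2 * x 3 * (e23 - e2 - e3) +
    x 3 * x 4 * (e34 - e3 - e4) + x 4 * x 5 * (e45 - e4 - e5) + x 5 * x 1 * (e51 - e5 - e1)

/-! ### Coordinates adapted to four points in general position -/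

lemma sum_fin_three_smul_cons {M : Type*} [AddCommGroup M] [Module ℂ M] (g : Fin 3 → ℂ)
    (v₀ v₁ v₂ : M) : ∑ i, g i • (![v₀, v₁, v₂] : Fin 3 → M) i = g 0 • v₀ + g 1 • v₁ + g 2 • v₂ := by
  simp [Fin.sum_univ_three]

lemma exists_plane_coordinates {p : Fin 4 → P 2} (hp : GeneralPosition₄ p) :
    ∃ A : (Fin 3 → ℂ) ≃ₗ[ℂ] (Fin 3 → ℂ), ∀ i, planeCubic (A (p i).rep) = 0 := by
  set v : Fin 4 → Fin 3 → ℂ := fun i => (p i).rep with hv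
  have h012 : LinearIndependent ℂ ![v 0, v 1, v 2] := hp 0 1 2 (by decide) (by decide) (by decide)
  have h312 : LinearIndependent ℂ ![v 3, v 1, v 2] := hp 3 1 2 (by decide) (by decide) (by decide)
  have h302 : LinearIndependent ℂ ![v 3, v 0, v 2] := hp 3 0 2 (by decide) (by decide) (by decide)
  have h301 : LinearIndependent ℂ ![v 3, v 0, v 1] := hp 3 0 1 (by decide) (by decide) (by decide)
  rw [Fintype.linearIndependent_iff] at h012 h312 h302 h301
  simp only [sum_fin_three_smul_cons] at h012 h312 h302 h301
  obtain ⟨c, hc⟩ : ∃ c : Fin 3 → ℂ, v 3 = c 0 • v 0 + c 1 • v 1 + c 2 • v 2 := by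
    let B := basisOfLinearIndependentOfCardEqFinrank
      (hp 0 1 2 (by decide) (by decide) (by decide)) (by simp)
    refine ⟨B.equivFun (v 3), ?_⟩
    have hB : ⇑B = ![v 0, v 1, v 2] := coe_basisOfLinearIndependentOfCardEqFinrank _ _
    have h := B.sum_equivFun (v 3)
    rw [hB, sum_fin_three_smul_cons] at h
    exact h.symm
  have hc0 : c 0 ≠ 0 := fun h => by
    have := h312 ![-1, c 1, c 2] (by simp [hc, h]) 0
    simp at this
  have hc1 : c 1 ≠ 0 := fun h => by
    have := h302 ![-1, c 0, c 2] (by simp [hc, h]) 0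
    simp at this
  have hc2 : c 2 ≠ 0 := fun h => by
    have := h301 ![-1, c 0, c 1] (by simp [hc, h]) 0
    simp at this
  have hB : LinearIndependent ℂ ![(-c 0) • v 0, c 1 • v 1, c 1 • v 1 + c 2 • v 2] := by
    rw [Fintype.linearIndependent_iff]
    intro g hg
    rw [sum_fin_three_smul_cons] at hg
    have key := h012 ![-c 0 * g 0, c 1 * (g 1 + g 2), c 2 * g 2] (by
      rw [← hg]
      simp
      module)
    have k0 := key 0
    have k1 := key 1
    have k2 := key 2
    simp [hc0, hc1, hc2] at k0 k1 k2
    intro i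
    fin_cases i
    · exact k0
    · simpa [k2] using k1
    · exact k2
  let B := basisOfLinearIndependentOfCardEqFinrank hB (by simp)
  have hA : ∀ w x, w 0 • (-c 0) • v 0 + w 1 • c 1 • v 1 + w 2 • (c 1 • v 1 + c 2 • v 2) = x →
      B.equivFun x = w := by
    intro w x h
    rw [← LinearEquiv.eq_symm_apply, Module.Basis.equivFun_symm_apply, Fin.sum_univ_three, ← h]
    simp [B]
  refine ⟨B.equivFun, fun i => ?_⟩
  have h0 := hA ![-(c 0)⁻¹, 0, 0] (v 0) (by simp [smul_smul, hc0])
  have h1 := hA ![0, (c 1)⁻¹, 0] (v 1) (by simp [smul_smul, hc1])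
  have h2 := hA ![0, -(c 2)⁻¹, (c 2)⁻¹] (v 2) (by simp [smul_smul, smul_add, hc2])
  have h3 := hA ![-1, 0, 1] (v 3) (by rw [hc]; simp; module)
  have hz : ∀ w : Fin 3 → ℂ, (w 1 = 0 ∧ w 2 = 0) ∨ (w 0 = 0 ∧ w 2 = 0) ∨
      (w 0 = 0 ∧ w 1 + w 2 = 0) ∨ (w 1 = 0 ∧ w 0 + w 2 = 0) → planeCubic w = 0 := by
    intro w hw
    ext k
    rcases hw with h | h | h | h <;> fin_cases k <;> simp [planeCubic, h]
  fin_cases i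
  · exact (congrArg planeCubic h0).trans (hz _ (by simp))
  · exact (congrArg planeCubic h1).trans (hz _ (by simp))
  · exact (congrArg planeCubic h2).trans (hz _ (by simp))
  · exact (congrArg planeCubic h3).trans (hz _ (by simp))

lemma eq_zero_of_sum_planeCubic {c : Fin 6 → ℂ} (h : ∀ u, ∑ j, c j * planeCubic u j = 0) :
    c = 0 := by
  have e1 := h ![0, 0, 1]
  have e2 := h ![1, 1, 0]
  have e3 := h ![1, -1, 0]
  have e4 := h ![1, 0, 1]
  have e5 := h ![0, 1, 1]
  have e6 := h ![1, 1, 1]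
  simp only [Fin.sum_univ_six, planeCubic, Matrix.cons_val] at e1 e2 e3 e4 e5 e6
  norm_num at e1 e2 e3 e4 e5 e6
  ext k
  fin_cases k <;> simp <;> grind

lemma exists_space_coordinates {p : Fin 4 → P 2} (hp : GeneralPosition₄ p)
    {b : Fin 6 → MvPolynomial (Fin 3) ℂ}
    (hbsys : Submodule.span ℂ (Set.range b) = linSys {x : P 2 | ∃ i, x = p i} 3 1) :
    ∃ (A : (Fin 3 → ℂ) ≃ₗ[ℂ] (Fin 3 → ℂ)) (E : (Fin 6 → ℂ) ≃ₗ[ℂ] (Fin 6 → ℂ)),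
      ∀ v, E (fun i => eval v (b i)) = planeCubic (A v) := by
  obtain ⟨A, hA⟩ := exists_plane_coordinates hp
  have hmem : ∀ j, pullback A.toLinearMap (planeCubic X j) ∈ Submodule.span ℂ (Set.range b) := by
    intro j
    rw [hbsys, mem_linSys_one]
    refine ⟨isHomogeneous_pullback _ ?_, ?_⟩
    · have hX := isHomogeneous_X ℂ (σ := Fin 3)
      have hm : ∀ i j k : Fin 3, (X i * X j * X k : MvPolynomial (Fin 3) ℂ).IsHomogeneous 3 :=
        fun i j k => ((hX i).mul (hX j)).mul (hX k)
      fin_cases j <;> simp only [planeCubic, Matrix.cons_val, sq, mul_add, Fin.reduceFinMk,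
        Fin.zero_eta, Fin.mk_one, ← mul_assoc]
      · exact hm _ _ _
      · exact hm _ _ _
      · exact hm _ _ _
      · exact (hm _ _ _).add (hm _ _ _)
      · exact ((hm _ _ _).add (hm _ _ _)).add (hm _ _ _)
      · exact (hm _ _ _).add (hm _ _ _)
    · rintro x ⟨i, rfl⟩
      rw [eval_pullback, map_planeCubic]
      simpa using congrFun (hA i) j
  choose D hD using fun j => Submodule.mem_span_range_iff_exists_fun ℂ |>.mp (hmem j)
  have hDv : ∀ v, Matrix.mulVec (Matrix.of D) (fun i => eval v (b i)) = planeCubic (A v) := by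
    intro v
    ext j
    have h := congrArg (eval v) (hD j)
    rw [eval_pullback, map_planeCubic] at h
    simpa [Matrix.mulVec, dotProduct, smul_eval] using h
  have hunit : IsUnit (Matrix.of D) := by
    rw [← Matrix.vecMul_injective_iff_isUnit]
    refine (injective_iff_map_eq_zero (Matrix.of D).vecMulLinear).mpr fun c hc => ?_
    refine eq_zero_of_sum_planeCubic fun u => ?_
    have h := hDv (A.symm u)
    rw [LinearEquiv.apply_symm_apply] at h
    have h2 : c ⬝ᵥ planeCubic u = 0 := by
      rw [← h, Matrix.dotProduct_mulVec]
      rw [Matrix.vecMulLinear_apply] at hc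
      rw [hc, zero_dotProduct]
    exact h2
  have hinj := Matrix.mulVec_injective_iff_isUnit.mpr hunit
  exact ⟨A, LinearEquiv.ofInjectiveEndo (Matrix.of D).mulVecLin hinj, hDv⟩

/-- A quintic del Pezzo surface is the pentagonal model in suitable linear coordinates. -/
lemma exists_model_coordinates {p : Fin 4 → P 2} (hp : GeneralPosition₄ p)
    {b : Fin 6 → MvPolynomial (Fin 3) ℂ}
    (hbsys : Submodule.span ℂ (Set.range b) = linSys {x : P 2 | ∃ i, x = p i} 3 1) :
    ∃ E : (Fin 6 → ℂ) ≃ₗ[ℂ] (Fin 6 → ℂ), ∀ x : P 5, x ∈ planarImage b ↔ quad (E x.rep) = 0 := by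
  obtain ⟨A, E, hE⟩ := exists_space_coordinates hp hbsys
  have hX := isHomogeneous_X ℂ (σ := Fin 6)
  have hQ : ∀ j, (pullback E.toLinearMap (quad X j)).IsHomogeneous 2 :=
    fun j => isHomogeneous_pullback _ (isHomogeneous_quad hX j)
  refine ⟨E, fun x => ⟨fun hx => ?_, fun hx => ?_⟩⟩
  · have hZ := Set.mem_sInter.mp hx
      {x | ∀ f ∈ Set.range fun j => pullback E.toLinearMap (quad X j), eval x.rep f = 0}
      ⟨⟨_, by rintro _ ⟨j, rfl⟩; exact ⟨2, hQ j⟩, rfl⟩, ?_⟩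
    · ext j
      simpa [map_quad] using hZ _ ⟨j, rfl⟩
    · rintro _ ⟨w, h, rfl⟩ _ ⟨j, rfl⟩
      rw [eval_rep_eq_zero_iff (hQ j), eval_pullback, map_quad]
      simp [hE, quad_planeCubic]
  · rintro _ ⟨⟨I, hI, rfl⟩, hsub⟩ f hf
    obtain ⟨d, hd⟩ := hI f hf
    have hfE : eval x.rep f = eval (E x.rep) (pullback E.symm.toLinearMap f) := by simp
    rw [hfE]
    refine eval_eq_zero_of_quad_eq_zero (isHomogeneous_pullback _ hd) (fun u hu => ?_) hx
    have hv : A.symm u ≠ 0 := by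
      intro h
      have hu0 : u = 0 := by simpa using h
      apply hu
      rw [hu0, ← zero_smul ℂ (0 : Fin 3 → ℂ), planeCubic_smul]
      simp
    obtain ⟨a, ha⟩ := Projectivization.exists_smul_eq_mk_rep ℂ (A.symm u) hv
    have hEa := hE (Projectivization.mk ℂ (A.symm u) hv).rep
    have ha0 : ((a : ℂ) ^ 3) ≠ 0 := pow_ne_zero _ a.ne_zero
    rw [← ha, Units.smul_def, map_smul, LinearEquiv.apply_symm_apply, planeCubic_smul,
      ← Units.smul_def, ha] at hEa
    have hne : (fun i => eval (Projectivization.mk ℂ (A.symm u) hv).rep (b i)) ≠ 0 := by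
      intro h
      rw [h, map_zero] at hEa
      exact smul_ne_zero ha0 hu hEa.symm
    have hT := hsub ⟨_, hne, rfl⟩ f hf
    rw [eval_rep_eq_zero_iff hd, ← E.symm_apply_apply (fun i => eval _ (b i)), hEa, map_smul,
      eval_smul_of_isHomogeneous hd] at hT
    simpa using (mul_eq_zero.mp hT).resolve_left (pow_ne_zero _ ha0)

/-! ### The secant lines of the surface -/

lemma mk_mem_projLinear {n : ℕ} {W : Submodule ℂ (Fin (n + 1) → ℂ)} {v : Fin (n + 1) → ℂ}
    (hv : v ≠ 0) : Projectivization.mk ℂ v hv ∈ projLinear W ↔ v ∈ W := by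
  rw [projLinear, Set.mem_ofPred_eq, Projectivization.submodule_mk,
    Submodule.span_singleton_le_iff_mem]

lemma span_pair_eq {n : ℕ} {W : Submodule ℂ (Fin n → ℂ)} (hW : Module.finrank ℂ W = 2)
    {a b : Fin n → ℂ} (h : LinearIndependent ℂ ![a, b]) (ha : a ∈ W) (hb : b ∈ W) :
    Submodule.span ℂ {a, b} = W := by
  apply Submodule.eq_of_le_of_finrank_eq
  · rw [Submodule.span_le]
    rintro x (rfl | rfl) <;> assumption
  · have h2 := finrank_span_eq_card h
    rw [Matrix.range_cons_cons_empty] at h2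
    rw [h2, hW, Fintype.card_fin]

/-- The affine cone over the secant line with parameter `y`. -/
def secantSpace (E : (Fin 6 → ℂ) ≃ₗ[ℂ] (Fin 6 → ℂ)) (y : Fin 5 → ℂ) :
    Submodule ℂ (Fin 6 → ℂ) :=
  (Submodule.span ℂ {secA y, secB y}).map E.symm.toLinearMap

lemma mem_secantSpace {E : (Fin 6 → ℂ) ≃ₗ[ℂ] (Fin 6 → ℂ)} {y : Fin 5 → ℂ} {w : Fin 6 → ℂ} :
    w ∈ secantSpace E y ↔ ∃ s t : ℂ, s • secA y + t • secB y = E w := by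
  rw [secantSpace, Submodule.mem_map_equiv, Submodule.mem_span_pair]
  rfl

lemma finrank_secantSpace (E : (Fin 6 → ℂ) ≃ₗ[ℂ] (Fin 6 → ℂ)) {y : Fin 5 → ℂ}
    (hy : coordProd y ≠ 0) : Module.finrank ℂ (secantSpace E y) = 2 := by
  have h := finrank_span_eq_card (linearIndependent_secant hy)
  rw [Matrix.range_cons_cons_empty] at h
  rw [secantSpace, LinearEquiv.finrank_map_eq, h, Fintype.card_fin]

lemma mem_secantSpace_of_quad {E : (Fin 6 → ℂ) ≃ₗ[ℂ] (Fin 6 → ℂ)} {y : Fin 5 → ℂ}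
    (hy : coordProd y ≠ 0) {w : Fin 6 → ℂ} {c : ℂ} (hc : c ≠ 0) (h : quad (E w) = c • y) :
    w ∈ secantSpace E y := by
  obtain ⟨s, t, e⟩ := exists_secant_of_syz hy (syz_eq_zero_of_quad_eq_smul hc h)
  exact mem_secantSpace.mpr ⟨s, t, e.symm⟩

lemma secant_injective {y : Fin 5 → ℂ} (hy : coordProd y ≠ 0) {s t s' t' : ℂ}
    (h : s • secA y + t • secB y = s' • secA y + t' • secB y) : s = s' ∧ t = t' := by
  have := LinearIndependent.pair_iff.mp (linearIndependent_secant hy) (s - s') (t - t')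
    (by rw [sub_smul, sub_smul]; linear_combination (exp := 1) h)
  exact ⟨sub_eq_zero.mp this.1, sub_eq_zero.mp this.2⟩

lemma exists_roots_secForm {y : Fin 5 → ℂ} (hd : secDisc y ≠ 0) :
    ∃ r r' : ℂ, r ≠ r' ∧ secForm y 1 r = 0 ∧ secForm y 1 r' = 0 ∧
      r + r' = secTrace y ∧ r * r' = secNorm y := by
  obtain ⟨d, hd2⟩ := IsAlgClosed.exists_pow_nat_eq (secDisc y) two_pos
  have hd0 : d ≠ 0 := by
    rintro rfl
    exact hd (by rw [← hd2]; simp)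
  rw [secDisc] at hd2
  refine ⟨(secTrace y + d) / 2, (secTrace y - d) / 2, fun h => hd0 ?_, ?_, ?_, by ring, ?_⟩
  · linear_combination h
  · rw [secForm]; linear_combination hd2 / 4
  · rw [secForm]; linear_combination hd2 / 4
  · linear_combination -hd2 / 4

section Surface

variable {S : Set (P 5)} {E : (Fin 6 → ℂ) ≃ₗ[ℂ] (Fin 6 → ℂ)}

lemma mk_mem_surface_iff (hS : ∀ x : P 5, x ∈ S ↔ quad (E x.rep) = 0) {v : Fin 6 → ℂ}
    (hv : v ≠ 0) : Projectivization.mk ℂ v hv ∈ S ↔ quad (E v) = 0 := by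
  obtain ⟨a, ha⟩ := Projectivization.exists_smul_eq_mk_rep ℂ v hv
  rw [hS, ← ha, Units.smul_def, map_smul, quad_smul, smul_eq_zero]
  simp

lemma isSecantLine_secantSpace (hS : ∀ x : P 5, x ∈ S ↔ quad (E x.rep) = 0) {y : Fin 5 → ℂ}
    (hy : coordProd y ≠ 0) (hd : secDisc y ≠ 0) :
    IsSecantLine (projLinear (secantSpace E y)) S := by
  refine ⟨⟨_, finrank_secantSpace E hy, rfl⟩, ?_⟩
  obtain ⟨r, r', hr, h, h', -⟩ := exists_roots_secForm hd
  have hne : ∀ r : ℂ, E.symm ((1 : ℂ) • secA y + r • secB y) ≠ 0 := by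
    intro r h0
    rw [LinearEquiv.map_eq_zero_iff] at h0
    exact one_ne_zero (secant_injective hy (s' := 0) (t' := 0) (by simpa using h0)).1
  have hmem : ∀ r : ℂ, secForm y 1 r = 0 →
      Projectivization.mk ℂ _ (hne r) ∈ projLinear (secantSpace E y) ∩ S := by
    intro r hr
    refine ⟨(mk_mem_projLinear _).mpr (mem_secantSpace.mpr ⟨1, r, by simp⟩),
      (mk_mem_surface_iff hS _).mpr ?_⟩
    rw [LinearEquiv.apply_symm_apply, quad_secant, hr, mul_zero, zero_smul]
  refine ⟨_, hmem r h, _, hmem r' h', fun e => hr ?_⟩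
  obtain ⟨a, ha⟩ := (Projectivization.mk_eq_mk_iff' ℂ _ _ _ _).mp e
  rw [← map_smul, E.symm.injective.eq_iff, smul_add, smul_smul, smul_smul] at ha
  obtain ⟨h1, h2⟩ := secant_injective hy ha
  rw [mul_one] at h1
  rw [← h2, h1, one_mul]

lemma eq_projLinear_secantSpace (hS : ∀ x : P 5, x ∈ S ↔ quad (E x.rep) = 0) {v : Fin 6 → ℂ}
    (hv : v ≠ 0) (hy : coordProd (quad (E v)) ≠ 0) {L : Set (P 5)} (hL : IsSecantLine L S)
    (hvL : Projectivization.mk ℂ v hv ∈ L) : L = projLinear (secantSpace E (quad (E v))) := by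
  obtain ⟨⟨W, hW, rfl⟩, a, ⟨haW, haS⟩, b, ⟨hbW, hbS⟩, hab⟩ := hL
  have hind : LinearIndependent ℂ ![a.rep, b.rep] := by
    have h := Projectivization.independent_iff.mp
      ((Projectivization.independent_pair_iff_ne a b).mpr hab)
    have e : Projectivization.rep ∘ ![a, b] = ![a.rep, b.rep] := by
      ext i : 1
      fin_cases i <;> rfl
    rwa [e] at h
  have hmem : ∀ c ∈ projLinear W, c.rep ∈ W := by
    intro c hc
    rw [← c.mk_rep] at hc
    exact (mk_mem_projLinear _).mp hc
  have hspan := span_pair_eq hW hind (hmem a haW) (hmem b hbW)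
  rw [mk_mem_projLinear, ← hspan, Submodule.mem_span_pair] at hvL
  obtain ⟨α, β, rfl⟩ := hvL
  have hqa := (hS a).mp haS
  have hqb := (hS b).mp hbS
  have hq : ∀ s t : ℂ, quad (s • E a.rep + t • E b.rep) =
      (s * t) • polar (E a.rep) (E b.rep) := by
    intro s t
    rw [quad_linComb, hqa, hqb, smul_zero, smul_zero, zero_add, zero_add]
  have hsyz : syz (E a.rep) (polar (E a.rep) (E b.rep)) = 0 ∧
      syz (E b.rep) (polar (E a.rep) (E b.rep)) = 0 := by
    have h1 := syz_quad ((1 : ℂ) • E a.rep + (1 : ℂ) • E b.rep)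
    have h2 := syz_quad ((1 : ℂ) • E a.rep + (-1 : ℂ) • E b.rep)
    rw [hq, syz_smul_right, syz_add, syz_smul, syz_smul] at h1 h2
    constructor
    · ext i
      have e1 := congrFun h1 i
      have e2 := congrFun h2 i
      simp at e1 e2 ⊢
      linear_combination (e1 - e2) / 2
    · ext i
      have e1 := congrFun h1 i
      have e2 := congrFun h2 i
      simp at e1 e2 ⊢
      linear_combination (e1 + e2) / 2
  have hEv : quad (E (α • a.rep + β • b.rep)) = (α * β) • polar (E a.rep) (E b.rep) := by
    rw [map_add, map_smul, map_smul, hq]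
  have hmemS : ∀ c : P 5, syz (E c.rep) (polar (E a.rep) (E b.rep)) = 0 →
      c.rep ∈ secantSpace E (quad (E (α • a.rep + β • b.rep))) := by
    intro c hc
    obtain ⟨s, t, e⟩ := exists_secant_of_syz hy (x := E c.rep)
      (by rw [hEv, syz_smul_right, hc, smul_zero])
    exact mem_secantSpace.mpr ⟨s, t, e.symm⟩
  congr 1
  rw [← hspan]
  exact span_pair_eq (finrank_secantSpace E hy) hind (hmemS a hsyz.1) (hmemS b hsyz.2)

lemma exists_quad_eq_one (E : (Fin 6 → ℂ) ≃ₗ[ℂ] (Fin 6 → ℂ)) :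
    ∃ v, quad (E v) = fun _ => (1 : ℂ) := by
  refine ⟨E.symm (secB fun _ => 1), ?_⟩
  rw [LinearEquiv.apply_symm_apply]
  ext i
  fin_cases i <;> simp [quad, secB]

/-- A property of points of `ℙ⁵` depending on a general value of the quadrics is generic. -/
lemma genericP_of_quad {Φ : P 5 → Prop} (G : MvPolynomial (Fin 5) ℂ)
    (hG : eval (fun _ => 1) G ≠ 0)
    (h : ∀ v (hv : v ≠ 0), eval (quad (E v)) G ≠ 0 → Φ (Projectivization.mk ℂ v hv)) :
    GenericP Φ := by
  have heval : ∀ v, eval v (pullback E.toLinearMap (aeval (quad X) G)) = eval (quad (E v)) G := by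
    intro v
    rw [eval_pullback, eval_aeval]
    simp
  obtain ⟨v, hv⟩ := exists_quad_eq_one E
  refine genericAff_of_eval (pullback E.toLinearMap (aeval (quad X) G)) v ?_ fun v hv h0 => ?_
  · rw [heval, hv]
    exact hG
  · rw [heval] at hv
    exact h v h0 hv

lemma eval_coordProd (y : Fin 5 → ℂ) :
    eval y (coordProd (X : Fin 5 → MvPolynomial (Fin 5) ℂ)) = coordProd y := by
  simp [coordProd]

lemma eval_secDisc (y : Fin 5 → ℂ) :
    eval y (secDisc (X : Fin 5 → MvPolynomial (Fin 5) ℂ)) = secDisc y := by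
  simp [secDisc, secTrace, secNorm]

lemma genericP_existsUnique_secant (hS : ∀ x : P 5, x ∈ S ↔ quad (E x.rep) = 0) :
    GenericP fun z : P 5 => ∃! L : Set (P 5), IsSecantLine L S ∧ z ∈ L := by
  refine genericP_of_quad (E := E) (coordProd X * secDisc X) ?_ fun v hv h => ?_
  · rw [map_mul, eval_coordProd, eval_secDisc]
    norm_num [coordProd, secDisc, secTrace, secNorm]
  · rw [map_mul, eval_coordProd, eval_secDisc] at h
    have hy := left_ne_zero_of_mul h
    refine ⟨_, ⟨isSecantLine_secantSpace hS hy (right_ne_zero_of_mul h), ?_⟩,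
      fun L hL => eq_projLinear_secantSpace hS hv hy hL.1 hL.2⟩
    exact (mk_mem_projLinear _).mpr
      (mem_secantSpace_of_quad hy one_ne_zero (one_smul ℂ _).symm)

/-! ### The quadrics through the surface -/

lemma linearIndependent_quad (E : (Fin 6 → ℂ) ≃ₗ[ℂ] (Fin 6 → ℂ)) :
    LinearIndependent ℂ fun j => pullback E.toLinearMap (quad X j) := by
  rw [Fintype.linearIndependent_iff]
  intro c hc
  have h : ∀ x : Fin 6 → ℂ, ∑ j, c j * quad x j = 0 := by
    intro x
    have := congrArg (eval (E.symm x)) hc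
    simpa [smul_eval, map_sum] using this
  have h0 := h ![0, 0, 1, 0, 0, 1]
  have h1 := h ![0, 1, 0, 1, 0, 0]
  have h2 := h ![0, 0, 1, 0, 1, 0]
  have h3 := h ![0, 0, 0, 1, 0, 1]
  have h4 := h ![0, 1, 0, 0, 1, 0]
  simp only [Fin.sum_univ_five, quad, Matrix.cons_val] at h0 h1 h2 h3 h4
  norm_num at h0 h1 h2 h3 h4
  intro i
  fin_cases i <;> assumption

lemma linSys_two_eq_span (hS : ∀ x : P 5, x ∈ S ↔ quad (E x.rep) = 0) :
    linSys S 2 1 = Submodule.span ℂ (Set.range fun j => pullback E.toLinearMap (quad X j)) := by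
  apply le_antisymm
  · intro f hf
    obtain ⟨hf2, hfS⟩ := mem_linSys_one.mp hf
    obtain ⟨c, hc⟩ := exists_eq_sum_quad (isHomogeneous_pullback E.symm.toLinearMap hf2) (by
      intro x hx
      rw [eval_pullback]
      by_cases h0 : x = 0
      · have := eval_smul_of_isHomogeneous hf2 0 x
        simpa [h0] using this
      · have hx0 : E.symm x ≠ 0 := by simpa using h0
        exact (eval_rep_eq_zero_iff hf2 _ hx0).mp
          (hfS _ ((mk_mem_surface_iff hS hx0).mpr (by simpa using hx))))
    refine (Submodule.mem_span_range_iff_exists_fun ℂ).mpr ⟨c, ?_⟩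
    refine MvPolynomial.funext fun v => ?_
    have := congrArg (eval (E v)) hc
    simpa [smul_eval, map_sum] using this.symm
  · rw [Submodule.span_le]
    rintro _ ⟨j, rfl⟩
    refine mem_linSys_one.mpr ⟨isHomogeneous_pullback _ (isHomogeneous_quad
      (isHomogeneous_X ℂ) j), fun x hx => ?_⟩
    rw [eval_pullback, eval_quad_X]
    exact congrFun ((hS x).mp hx) j

lemma finrank_linSys_two (hS : ∀ x : P 5, x ∈ S ↔ quad (E x.rep) = 0) :
    Module.finrank ℂ (linSys S 2 1) = 5 := by
  rw [linSys_two_eq_span hS, finrank_span_eq_card (linearIndependent_quad E), Fintype.card_fin]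

lemma exists_target_coordinates (hS : ∀ x : P 5, x ∈ S ↔ quad (E x.rep) = 0) {μ : RatMap 5 4}
    (hμ : LinearIndependent ℂ μ.g) (hspan : Submodule.span ℂ (Set.range μ.g) = linSys S 2 1) :
    ∃ U : (Fin 5 → ℂ) ≃ₗ[ℂ] (Fin 5 → ℂ), ∀ v, (fun i => eval v (μ.g i)) = U (quad (E v)) := by
  have hmem : ∀ i, μ.g i ∈
      Submodule.span ℂ (Set.range fun j => pullback E.toLinearMap (quad X j)) := by
    intro i
    rw [← linSys_two_eq_span hS, ← hspan]
    exact Submodule.subset_span ⟨i, rfl⟩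
  choose D hD using fun j => Submodule.mem_span_range_iff_exists_fun ℂ |>.mp (hmem j)
  have hDv : ∀ v, (fun i => eval v (μ.g i)) = Matrix.mulVec (Matrix.of D) (quad (E v)) := by
    intro v
    ext j
    have h := congrArg (eval v) (hD j)
    simpa [Matrix.mulVec, dotProduct, smul_eval] using h.symm
  have hunit : IsUnit (Matrix.of D) := by
    rw [← Matrix.vecMul_injective_iff_isUnit]
    refine (injective_iff_map_eq_zero (Matrix.of D).vecMulLinear).mpr fun c hc => ?_
    ext i
    refine Fintype.linearIndependent_iff.mp hμ c (MvPolynomial.funext fun v => ?_) i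
    have h2 : c ⬝ᵥ (fun i => eval v (μ.g i)) = 0 := by
      rw [hDv, Matrix.dotProduct_mulVec]
      rw [Matrix.vecMulLinear_apply] at hc
      rw [hc, zero_dotProduct]
    simpa [dotProduct, smul_eval, map_sum] using h2
  have hinj := Matrix.mulVec_injective_iff_isUnit.mpr hunit
  exact ⟨LinearEquiv.ofInjectiveEndo (Matrix.of D).mulVecLin hinj, hDv⟩

/-! ### The map defined by the quadrics -/

variable {μ : RatMap 5 4} {U : (Fin 5 → ℂ) ≃ₗ[ℂ] (Fin 5 → ℂ)}

lemma ratMap_toFun_mk {n k : ℕ} (ν : RatMap n k) {v : Fin (n + 1) → ℂ} (hv : v ≠ 0)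
    (h : (fun i => eval v (ν.g i)) ≠ 0) :
    ν.toFun (Projectivization.mk ℂ v hv) = Projectivization.mk ℂ _ h := by
  obtain ⟨a, ha⟩ := Projectivization.exists_smul_eq_mk_rep ℂ v hv
  have e : (fun i => eval (Projectivization.mk ℂ v hv).rep (ν.g i)) =
      ((a : ℂ) ^ ν.d) • fun i => eval v (ν.g i) := by
    ext i
    rw [← ha, Units.smul_def, eval_smul_of_isHomogeneous (ν.homog i)]
    rfl
  have hne : (fun i => eval (Projectivization.mk ℂ v hv).rep (ν.g i)) ≠ 0 := by
    rw [e]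
    exact smul_ne_zero (pow_ne_zero _ a.ne_zero) h
  rw [RatMap.toFun, dif_pos hne, Projectivization.mk_eq_mk_iff']
  exact ⟨_, e.symm⟩

lemma toFun_mk (hμ : ∀ v, (fun i => eval v (μ.g i)) = U (quad (E v))) {v : Fin 6 → ℂ} (hv : v ≠ 0)
    (hq : quad (E v) ≠ 0) :
    μ.toFun (Projectivization.mk ℂ v hv) =
      Projectivization.mk ℂ (U (quad (E v))) (by simpa using hq) := by
  rw [ratMap_toFun_mk μ hv (by rw [hμ]; simpa using hq)]
  simp only [hμ]

lemma fibre_eq (hS : ∀ x : P 5, x ∈ S ↔ quad (E x.rep) = 0)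
    (hμ : ∀ v, (fun i => eval v (μ.g i)) = U (quad (E v))) {v : Fin 6 → ℂ} (hv : v ≠ 0)
    (hy : coordProd (quad (E v)) ≠ 0) :
    {w : P 5 | w ∉ S ∧ μ.toFun w = μ.toFun (Projectivization.mk ℂ v hv)} =
      projLinear (secantSpace E (quad (E v))) \ S := by
  have hq0 : quad (E v) ≠ 0 := fun h => coordProd_ne_zero hy 0 (congrFun h 0)
  ext w
  induction w using Projectivization.ind with
  | h w hw =>
    rw [Set.mem_ofPred_eq, Set.mem_sdiff, and_comm]
    refine and_congr_left fun hwS => ?_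
    rw [mk_mem_surface_iff hS] at hwS
    rw [toFun_mk hμ hw hwS, toFun_mk hμ hv hq0, Projectivization.mk_eq_mk_iff', mk_mem_projLinear]
    constructor
    · rintro ⟨a, ha⟩
      rw [← map_smul, U.injective.eq_iff] at ha
      refine mem_secantSpace_of_quad hy (c := a) ?_ ha.symm
      rintro rfl
      exact hwS (by rw [← ha, zero_smul])
    · intro h
      obtain ⟨s, t, e⟩ := mem_secantSpace.mp h
      exact ⟨_, by rw [← e, quad_secant, map_smul]⟩

lemma genericP_fibre (hS : ∀ x : P 5, x ∈ S ↔ quad (E x.rep) = 0)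
    (hμ : ∀ v, (fun i => eval v (μ.g i)) = U (quad (E v))) :
    GenericP fun z : P 5 => ∃ L : Set (P 5), IsSecantLine L S ∧ z ∈ L ∧
      {w : P 5 | w ∉ S ∧ μ.toFun w = μ.toFun z} = L \ S := by
  refine genericP_of_quad (E := E) (coordProd X * secDisc X) ?_ fun v hv h => ?_
  · rw [map_mul, eval_coordProd, eval_secDisc]
    norm_num [coordProd, secDisc, secTrace, secNorm]
  · rw [map_mul, eval_coordProd, eval_secDisc] at h
    have hy := left_ne_zero_of_mul h
    exact ⟨_, isSecantLine_secantSpace hS hy (right_ne_zero_of_mul h), (mk_mem_projLinear _).mpr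
      (mem_secantSpace_of_quad hy one_ne_zero (one_smul ℂ _).symm), fibre_eq hS hμ hv hy⟩

lemma dominantTo_univ_of_genericP {n k : ℕ} {μ : RatMap n k} {A : Set (P n)}
    (h : GenericP fun y => ∃ x ∈ A, μ.toFun x = y) : DominantTo μ A Set.univ := by
  refine ⟨fun y _ => Set.mem_sInter.mpr fun Z hZ => hZ.2 (Set.mem_univ _), ?_⟩
  rintro _ ⟨I, hI, rfl⟩ hne hsub
  obtain ⟨y, -, hy⟩ := Set.not_subset.mp hne
  simp only [Set.mem_ofPred_eq, not_forall] at hy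
  obtain ⟨f, hf, hfy⟩ := hy
  obtain ⟨d, hd⟩ := hI f hf
  obtain ⟨g, hg, hgen⟩ := h
  obtain ⟨w, hw⟩ := exists_eval_ne_zero
    (mul_ne_zero (mul_ne_zero hg (ne_zero_of_eval_ne_zero hfy)) (X_ne_zero (R := ℂ) 0))
  simp only [map_mul, eval_X] at hw
  have hw0 : w ≠ 0 := by
    rintro rfl
    simp at hw
  obtain ⟨x, hx, hxy⟩ := hgen w (left_ne_zero_of_mul (left_ne_zero_of_mul hw)) hw0
  have := hsub ⟨x, hx, hxy⟩ f hf
  rw [eval_rep_eq_zero_iff hd] at this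
  exact right_ne_zero_of_mul (left_ne_zero_of_mul hw) this

lemma dominantTo_univ (hμ : ∀ v, (fun i => eval v (μ.g i)) = U (quad (E v))) :
    DominantTo μ Set.univ Set.univ := by
  refine dominantTo_univ_of_genericP (genericAff_of_eval
    (pullback U.symm.toLinearMap (coordProd X)) (U fun _ => 1) ?_ fun y hy hy0 => ?_)
  · rw [eval_pullback, eval_coordProd]
    simp [coordProd]
  · rw [eval_pullback, eval_coordProd] at hy
    set u := U.symm y with hu
    have hq : quad (secB u) = coordProd u • u := by
      have := quad_secant u 0 1
      simpa [secForm] using this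
    have hu0 : u ≠ 0 := by simpa [hu] using hy0
    have hEq : quad (E (E.symm (secB u))) = coordProd u • u := by simp [hq]
    have hne : quad (E (E.symm (secB u))) ≠ 0 := by
      rw [hEq]
      exact smul_ne_zero hy hu0
    have hB : E.symm (secB u) ≠ 0 := by
      intro h
      apply hne
      rw [h, map_zero, ← zero_smul ℂ (0 : Fin 6 → ℂ), quad_smul]
      simp
    refine ⟨Projectivization.mk ℂ _ hB, trivial, ?_⟩
    rw [toFun_mk hμ hB hne, Projectivization.mk_eq_mk_iff']
    exact ⟨coordProd u, by rw [hEq, map_smul, hu, LinearEquiv.apply_symm_apply]⟩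

end Surface

/-! ### Inverting the map on a cubic hypersurface -/

/-- The point where a cubic through the surface residually meets the secant line with
parameter `y`. -/
def residual (f : MvPolynomial (Fin 6) ℂ) (y : Fin 5 → ℂ) : Fin 6 → ℂ :=
  (secNorm y * eval (secB y) f) • secA y + (-eval (secA y) f) • secB y

/-- The genericity condition on `y` under which `residual` is well behaved. -/
def residualCond (f : MvPolynomial (Fin 6) ℂ) (y : Fin 5 → ℂ) : ℂ :=
  coordProd y * secDisc y * secNorm y *
    secForm y (secNorm y * eval (secB y) f) (-eval (secA y) f)

/-- `residual` as a vector of polynomials. -/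
def residualPoly (f : MvPolynomial (Fin 6) ℂ) (k : Fin 6) : MvPolynomial (Fin 5) ℂ :=
  secNorm X * aeval (secB X) f * secA X k - aeval (secA X) f * secB X k

/-- `residualCond` as a polynomial. -/
def residualCondPoly (f : MvPolynomial (Fin 6) ℂ) : MvPolynomial (Fin 5) ℂ :=
  coordProd X * secDisc X * secNorm X *
    secForm X (secNorm X * aeval (secB X) f) (-aeval (secA X) f)

lemma eval_secA (y : Fin 5 → ℂ) (k : Fin 6) :
    eval y (secA (X : Fin 5 → MvPolynomial (Fin 5) ℂ) k) = secA y k := by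
  fin_cases k <;> simp [secA]

lemma eval_secB (y : Fin 5 → ℂ) (k : Fin 6) :
    eval y (secB (X : Fin 5 → MvPolynomial (Fin 5) ℂ) k) = secB y k := by
  fin_cases k <;> simp [secB]

lemma eval_secTrace (y : Fin 5 → ℂ) :
    eval y (secTrace (X : Fin 5 → MvPolynomial (Fin 5) ℂ)) = secTrace y := by
  simp [secTrace]

lemma eval_secNorm (y : Fin 5 → ℂ) :
    eval y (secNorm (X : Fin 5 → MvPolynomial (Fin 5) ℂ)) = secNorm y := by
  simp [secNorm]

lemma eval_residualPoly (f : MvPolynomial (Fin 6) ℂ) (y : Fin 5 → ℂ) (k : Fin 6) :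
    eval y (residualPoly f k) = residual f y k := by
  simp only [residualPoly, residual, map_sub, map_mul, eval_aeval, eval_secA, eval_secB,
    eval_secNorm, Pi.add_apply, Pi.smul_apply, smul_eq_mul]
  ring

lemma eval_residualCondPoly (f : MvPolynomial (Fin 6) ℂ) (y : Fin 5 → ℂ) :
    eval y (residualCondPoly f) = residualCond f y := by
  simp only [residualCondPoly, residualCond, secForm, map_add, map_sub, map_mul, map_neg, map_pow,
    eval_aeval, eval_secA, eval_secB, eval_secNorm, eval_secTrace, eval_secDisc, eval_coordProd]

section Homogeneous

lemma isHomogeneous_coordProd :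
    (coordProd (X : Fin 5 → MvPolynomial (Fin 5) ℂ)).IsHomogeneous 5 := by
  have hX := isHomogeneous_X ℂ (σ := Fin 5)
  exact ((((hX 0).mul (hX 1)).mul (hX 2)).mul (hX 3)).mul (hX 4)

lemma isHomogeneous_secTrace :
    (secTrace (X : Fin 5 → MvPolynomial (Fin 5) ℂ)).IsHomogeneous 2 := by
  have h : ∀ i j : Fin 5, (X i * X j : MvPolynomial (Fin 5) ℂ).IsHomogeneous 2 :=
    fun i j => (isHomogeneous_X ℂ i).mul (isHomogeneous_X ℂ j)
  exact ((((h _ _).add (h _ _)).add (h _ _)).add (h _ _)).add (h _ _)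

lemma isHomogeneous_secNorm :
    (secNorm (X : Fin 5 → MvPolynomial (Fin 5) ℂ)).IsHomogeneous 4 := by
  have h : ∀ i j k : Fin 5, (X i ^ 2 * X j * X k : MvPolynomial (Fin 5) ℂ).IsHomogeneous 4 :=
    fun i j k => (((isHomogeneous_X ℂ i).pow 2).mul (isHomogeneous_X ℂ j)).mul
      (isHomogeneous_X ℂ k)
  exact ((((h _ _ _).add (h _ _ _)).add (h _ _ _)).add (h _ _ _)).add (h _ _ _)

lemma isHomogeneous_secDisc :
    (secDisc (X : Fin 5 → MvPolynomial (Fin 5) ℂ)).IsHomogeneous 4 :=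
  (isHomogeneous_secTrace.pow 2).sub ((isHomogeneous_C (Fin 5) (4 : ℂ)).mul isHomogeneous_secNorm)

lemma isHomogeneous_secB (k : Fin 6) :
    (secB (X : Fin 5 → MvPolynomial (Fin 5) ℂ) k).IsHomogeneous 3 := by
  have h : ∀ i j k : Fin 5, (X i * X j * X k : MvPolynomial (Fin 5) ℂ).IsHomogeneous 3 :=
    fun i j k => ((isHomogeneous_X ℂ i).mul (isHomogeneous_X ℂ j)).mul (isHomogeneous_X ℂ k)
  fin_cases k
  · exact isHomogeneous_zero _ _ _
  all_goals exact h _ _ _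

lemma isHomogeneous_secA (k : Fin 6) :
    (secA (X : Fin 5 → MvPolynomial (Fin 5) ℂ) k).IsHomogeneous 5 := by
  have h2 : ∀ i j : Fin 5, (X i * X j : MvPolynomial (Fin 5) ℂ).IsHomogeneous 2 :=
    fun i j => (isHomogeneous_X ℂ i).mul (isHomogeneous_X ℂ j)
  have h : ∀ a b c d e i j : Fin 5,
      (-(X a * X b * X c * (X d * X e + X i * X j)) : MvPolynomial (Fin 5) ℂ).IsHomogeneous 5 :=
    fun a b c d e i j => (((h2 a b).mul (isHomogeneous_X ℂ c)).mul ((h2 d e).add (h2 i j))).neg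
  fin_cases k
  · exact isHomogeneous_coordProd
  all_goals exact h _ _ _ _ _ _ _

variable {f : MvPolynomial (Fin 6) ℂ}

lemma isHomogeneous_residualPoly (hf : f.IsHomogeneous 3) (k : Fin 6) :
    (residualPoly f k).IsHomogeneous 18 :=
  ((isHomogeneous_secNorm.mul (hf.aeval _ isHomogeneous_secB)).mul (isHomogeneous_secA k)).sub
    ((hf.aeval _ isHomogeneous_secA).mul (isHomogeneous_secB k))

lemma isHomogeneous_residualCondPoly (hf : f.IsHomogeneous 3) :
    (residualCondPoly f).IsHomogeneous 43 := by
  have hA := (hf.aeval _ isHomogeneous_secA).neg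
  have hB := isHomogeneous_secNorm.mul (hf.aeval _ isHomogeneous_secB)
  exact ((isHomogeneous_coordProd.mul isHomogeneous_secDisc).mul isHomogeneous_secNorm).mul
    (((hA.pow 2).sub ((isHomogeneous_secTrace.mul hA).mul hB)).add
      (isHomogeneous_secNorm.mul (hB.pow 2)))

end Homogeneous

section Residual

variable {f : MvPolynomial (Fin 6) ℂ}

/-- On a secant line, a cubic through the surface is the quadratic form cutting out the surface
times a linear form. -/
lemma eval_secant_of_cubic (hf : f.IsHomogeneous 3) (hfQ : ∀ x, quad x = 0 → eval x f = 0)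
    {y : Fin 5 → ℂ} (hd : secDisc y ≠ 0) (s t : ℂ) :
    secNorm y * eval (s • secA y + t • secB y) f =
      secForm y s t * (secNorm y * eval (secB y) f * t + eval (secA y) f * s) := by
  obtain ⟨c, e, h⟩ := exists_eval_linComb_of_cubic hf (secA y) (secB y)
  obtain ⟨r, r', hr, h1, h2, hσ, hρ⟩ := exists_roots_secForm hd
  have hroot : ∀ r, secForm y 1 r = 0 → eval ((1 : ℂ) • secA y + r • secB y) f = 0 :=
    fun r h => hfQ _ (by rw [quad_secant, h, mul_zero, zero_smul])
  have e1 := hroot r h1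
  have e2 := hroot r' h2
  rw [h] at e1 e2
  rw [h]
  generalize eval (secA y) f = a at *
  generalize eval (secB y) f = d at *
  have hr0 := sub_ne_zero.mpr hr
  have hc : c = r * r' * d - (r + r') * (e + (r + r') * d) :=
    mul_left_cancel₀ hr0 (by linear_combination e1 - e2)
  have ha : a = r * r' * (e + (r + r') * d) :=
    mul_left_cancel₀ hr0 (by linear_combination r * e2 - r' * e1)
  rw [secForm, ← hσ, ← hρ, ha, hc]
  ring

lemma eval_residual (hf : f.IsHomogeneous 3) (hfQ : ∀ x, quad x = 0 → eval x f = 0)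
    {y : Fin 5 → ℂ} (hy : residualCond f y ≠ 0) : eval (residual f y) f = 0 := by
  have h3 := left_ne_zero_of_mul hy
  have hd := right_ne_zero_of_mul (left_ne_zero_of_mul h3)
  have h := eval_secant_of_cubic hf hfQ hd (secNorm y * eval (secB y) f) (-eval (secA y) f)
  refine (mul_eq_zero.mp (h.trans ?_)).resolve_left (right_ne_zero_of_mul h3)
  ring

lemma exists_quad_residual {y : Fin 5 → ℂ} (hy : residualCond f y ≠ 0) :
    ∃ c : ℂ, c ≠ 0 ∧ quad (residual f y) = c • y :=
  ⟨_, mul_ne_zero (left_ne_zero_of_mul (left_ne_zero_of_mul (left_ne_zero_of_mul hy)))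
    (right_ne_zero_of_mul hy), quad_secant _ _ _⟩

lemma exists_residual_quad (hf : f.IsHomogeneous 3) (hfQ : ∀ x, quad x = 0 → eval x f = 0)
    {x : Fin 6 → ℂ} (hx : eval x f = 0) (hy : residualCond f (quad x) ≠ 0) :
    ∃ c : ℂ, c ≠ 0 ∧ residual f (quad x) = c • x := by
  have h3 := left_ne_zero_of_mul hy
  have hρ := right_ne_zero_of_mul h3
  have hd := right_ne_zero_of_mul (left_ne_zero_of_mul h3)
  have hP := left_ne_zero_of_mul (left_ne_zero_of_mul h3)
  have hform := right_ne_zero_of_mul hy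
  have hq0 : quad x ≠ 0 := fun h => coordProd_ne_zero hP 0 (congrFun h 0)
  obtain ⟨s, t, hst⟩ := exists_secant_of_syz hP (syz_quad x)
  have hF : secForm (quad x) s t ≠ 0 := by
    intro h
    have := quad_secant (quad x) s t
    rw [← hst, h, mul_zero, zero_smul] at this
    exact hq0 this
  have hlin := eval_secant_of_cubic hf hfQ hd s t
  rw [← hst, hx, mul_zero, eq_comm, mul_eq_zero] at hlin
  have hcross := hlin.resolve_left hF
  have key : ∃ c : ℂ, secNorm (quad x) * eval (secB (quad x)) f = c * s ∧
      -eval (secA (quad x)) f = c * t := by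
    by_cases hs : s = 0
    · have ht : t ≠ 0 := by
        rintro rfl
        exact hF (by simp [secForm, hs])
      refine ⟨-eval (secA (quad x)) f / t, ?_, by field_simp⟩
      rw [hs, mul_zero, add_zero] at hcross
      rw [hs, mul_zero]
      exact (mul_eq_zero.mp hcross).resolve_right ht
    · refine ⟨secNorm (quad x) * eval (secB (quad x)) f / s, by field_simp, ?_⟩
      field_simp
      linear_combination -hcross
  obtain ⟨c, h1, h2⟩ := key
  refine ⟨c, ?_, ?_⟩
  · rintro rfl
    apply hform
    rw [h1, h2]
    simp [secForm]
  · rw [residual, h1, h2, mul_smul, mul_smul, ← smul_add]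
    exact congrArg (c • ·) hst.symm

end Residual

section Birational

variable {E : (Fin 6 → ℂ) ≃ₗ[ℂ] (Fin 6 → ℂ)} {μ : RatMap 5 4}
  {U : (Fin 5 → ℂ) ≃ₗ[ℂ] (Fin 5 → ℂ)} {f : MvPolynomial (Fin 6) ℂ}

/-- The inverse rational map. -/
def inverseMap (E : (Fin 6 → ℂ) ≃ₗ[ℂ] (Fin 6 → ℂ)) (U : (Fin 5 → ℂ) ≃ₗ[ℂ] (Fin 5 → ℂ))
    (hf : f.IsHomogeneous 3) : RatMap 4 5 where
  d := 18
  g i := pullback U.symm.toLinearMap (aeval (residualPoly f)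
    (functionalPoly (LinearMap.proj i ∘ₗ E.symm.toLinearMap)))
  homog _ := isHomogeneous_pullback _
    ((isHomogeneous_functionalPoly _).aeval _ (isHomogeneous_residualPoly hf))

lemma eval_inverseMap (hf : f.IsHomogeneous 3) (y : Fin 5 → ℂ) :
    (fun i => eval y ((inverseMap E U hf).g i)) = E.symm (residual f (U.symm y)) := by
  ext i
  change eval y (pullback U.symm.toLinearMap (aeval (residualPoly f) (functionalPoly _))) = _
  rw [eval_pullback, eval_aeval, eval_functionalPoly]
  simp [eval_residualPoly]

lemma residualCond_smul (hf : f.IsHomogeneous 3) (a : ℂ) (y : Fin 5 → ℂ) :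
    residualCond f (a • y) = a ^ 43 * residualCond f y := by
  rw [← eval_residualCondPoly, ← eval_residualCondPoly,
    eval_smul_of_isHomogeneous (isHomogeneous_residualCondPoly hf)]

lemma birationalOnto_of_residualCond (hμ : ∀ v, (fun i => eval v (μ.g i)) = U (quad (E v)))
    {F : MvPolynomial (Fin 6) ℂ} (hF : F.IsHomogeneous 3)
    (hFE : pullback E.symm.toLinearMap F = f) (hfQ : ∀ x, quad x = 0 → eval x f = 0)
    (h₁ : residualCond f (fun _ => 1) ≠ 0) :
    BirationalOnto μ (hypersurface F) Set.univ := by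
  have hf : f.IsHomogeneous 3 := hFE ▸ isHomogeneous_pullback _ hF
  have hFf : ∀ v, eval v F = eval (E v) f := by
    intro v
    simp [← hFE]
  have mem_hyp : ∀ {v : Fin 6 → ℂ} (hv : v ≠ 0),
      Projectivization.mk ℂ v hv ∈ hypersurface F ↔ eval (E v) f = 0 := by
    intro v hv
    rw [← hFf]
    exact eval_rep_eq_zero_iff hF v hv
  have cond_ne : ∀ {y : Fin 5 → ℂ}, residualCond f y ≠ 0 → y ≠ 0 := by
    rintro _ hy rfl
    exact hy (by simp [residualCond, coordProd])
  have quad_zero : quad (0 : Fin 6 → ℂ) = 0 := by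
    rw [← zero_smul ℂ (0 : Fin 6 → ℂ), quad_smul]
    simp
  have residual_ne : ∀ {y : Fin 5 → ℂ}, residualCond f y ≠ 0 → residual f y ≠ 0 := by
    intro y hy h0
    obtain ⟨c, hc, e⟩ := exists_quad_residual hy
    rw [h0, quad_zero] at e
    exact smul_ne_zero hc (cond_ne hy) e.symm
  have inv : ∀ (y : Fin 5 → ℂ) (hy0 : y ≠ 0), residualCond f (U.symm y) ≠ 0 →
      (inverseMap E U hf).toFun (Projectivization.mk ℂ y hy0) ∈ hypersurface F ∧
        μ.toFun ((inverseMap E U hf).toFun (Projectivization.mk ℂ y hy0)) =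
          Projectivization.mk ℂ y hy0 := by
    intro y hy0 hy
    have hne : E.symm (residual f (U.symm y)) ≠ 0 := by simpa using residual_ne hy
    have e : (inverseMap E U hf).toFun (Projectivization.mk ℂ y hy0) =
        Projectivization.mk ℂ _ hne := by
      rw [ratMap_toFun_mk _ hy0 (by rw [eval_inverseMap]; exact hne)]
      simp only [eval_inverseMap]
    obtain ⟨c, hc, hq⟩ := exists_quad_residual hy
    rw [e]
    constructor
    · rw [mem_hyp, LinearEquiv.apply_symm_apply]
      exact eval_residual hf hfQ hy
    · rw [toFun_mk hμ hne (by
        rw [LinearEquiv.apply_symm_apply, hq]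
        exact smul_ne_zero hc (cond_ne hy)), Projectivization.mk_eq_mk_iff']
      exact ⟨c, by rw [LinearEquiv.apply_symm_apply, hq, map_smul, LinearEquiv.apply_symm_apply]⟩
  have hcond5 : ∀ v, eval v (pullback E.toLinearMap (aeval (quad X) (residualCondPoly f))) =
      residualCond f (quad (E v)) := by
    intro v
    rw [eval_pullback, eval_aeval, ← eval_residualCondPoly]
    simp
  have hhom5 : (pullback E.toLinearMap (aeval (quad X) (residualCondPoly f))).IsHomogeneous
      (2 * 43) :=
    isHomogeneous_pullback _ ((isHomogeneous_residualCondPoly hf).aeval _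
      (isHomogeneous_quad (isHomogeneous_X ℂ)))
  have hcond4 : ∀ y, eval y (pullback U.symm.toLinearMap (residualCondPoly f)) =
      residualCond f (U.symm y) := by
    intro y
    rw [eval_pullback, eval_residualCondPoly]
    rfl
  have hhom4 : (pullback U.symm.toLinearMap (residualCondPoly f)).IsHomogeneous 43 :=
    isHomogeneous_pullback _ (isHomogeneous_residualCondPoly hf)
  have hU1 : residualCond f (U.symm (U fun _ => 1)) ≠ 0 := by simpa using h₁
  refine ⟨dominantTo_univ_of_genericP (genericAff_of_eval
    (pullback U.symm.toLinearMap (residualCondPoly f)) (U fun _ => 1) ?_ fun y hy hy0 => ?_),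
    inverseMap E U hf, ?_, ?_⟩
  · rw [hcond4]
    exact hU1
  · rw [hcond4] at hy
    exact ⟨_, (inv y hy0 hy).1, (inv y hy0 hy).2⟩
  · refine ⟨{x | ∀ g ∈ ({pullback E.toLinearMap (aeval (quad X) (residualCondPoly f))} : Set _),
      eval x.rep g = 0}, ⟨_, ?_, rfl⟩, ?_, ?_⟩
    · rintro _ rfl
      exact ⟨_, hhom5⟩
    · intro hsub
      have hne : E.symm (residual f fun _ => 1) ≠ 0 := by simpa using residual_ne h₁
      have h := hsub ((mem_hyp hne).mpr (by
        rw [LinearEquiv.apply_symm_apply]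
        exact eval_residual hf hfQ h₁)) _ rfl
      obtain ⟨c, hc, hq⟩ := exists_quad_residual h₁
      rw [eval_rep_eq_zero_iff hhom5, hcond5, LinearEquiv.apply_symm_apply, hq,
        residualCond_smul hf] at h
      exact mul_ne_zero (pow_ne_zero _ hc) h₁ h
    · intro x
      induction x using Projectivization.ind with
      | h v hv =>
        intro hx hxZ
        rw [mem_hyp] at hx
        have hy : residualCond f (quad (E v)) ≠ 0 := by
          intro h
          apply hxZ
          rintro _ rfl
          rw [eval_rep_eq_zero_iff hhom5, hcond5, h]
        refine ⟨trivial, ?_⟩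
        obtain ⟨c, hc, hres⟩ := exists_residual_quad hf hfQ hx hy
        rw [toFun_mk hμ hv (cond_ne hy), ratMap_toFun_mk _ _ (by
          rw [eval_inverseMap, LinearEquiv.symm_apply_apply]
          simpa using residual_ne hy), Projectivization.mk_eq_mk_iff']
        exact ⟨c, by rw [eval_inverseMap, LinearEquiv.symm_apply_apply, hres, map_smul,
          LinearEquiv.symm_apply_apply]⟩
  · refine ⟨{x | ∀ g ∈ ({pullback U.symm.toLinearMap (residualCondPoly f)} : Set _),
      eval x.rep g = 0}, ⟨_, ?_, rfl⟩, ?_, ?_⟩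
    · rintro _ rfl
      exact ⟨_, hhom4⟩
    · intro hsub
      have hne : (U fun _ => 1) ≠ 0 := by simpa using cond_ne h₁
      have h := hsub (Set.mem_univ (Projectivization.mk ℂ _ hne)) _ rfl
      rw [eval_rep_eq_zero_iff hhom4, hcond4] at h
      exact hU1 h
    · intro y
      induction y using Projectivization.ind with
      | h y hy0 =>
        intro _ hyZ
        refine inv y hy0 fun h => hyZ ?_
        rintro _ rfl
        rw [eval_rep_eq_zero_iff hhom4, hcond4, h]

variable {S : Set (P 5)}

lemma pullback_symm_eval_eq_zero (hS : ∀ x : P 5, x ∈ S ↔ quad (E x.rep) = 0) {d : ℕ}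
    (hd : d ≠ 0) {F : MvPolynomial (Fin 6) ℂ} (hF : F ∈ linSys S d 1) {x : Fin 6 → ℂ}
    (hx : quad x = 0) : eval x (pullback E.symm.toLinearMap F) = 0 := by
  obtain ⟨hF2, hFS⟩ := mem_linSys_one.mp hF
  rw [eval_pullback]
  by_cases h0 : x = 0
  · have := eval_smul_of_isHomogeneous hF2 0 x
    simpa [h0, hd] using this
  · have hx0 : E.symm x ≠ 0 := by simpa using h0
    exact (eval_rep_eq_zero_iff hF2 _ hx0).mp
      (hFS _ ((mk_mem_surface_iff hS hx0).mpr (by simpa using hx)))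

lemma pullback_mem_linSys (hS : ∀ x : P 5, x ∈ S ↔ quad (E x.rep) = 0) {d : ℕ}
    {G : MvPolynomial (Fin 6) ℂ} (hG : G.IsHomogeneous d) (hGQ : ∀ x, quad x = 0 → eval x G = 0) :
    pullback E.toLinearMap G ∈ linSys S d 1 :=
  mem_linSys_one.mpr ⟨isHomogeneous_pullback _ hG, fun x hx => by
    rw [eval_pullback]
    exact hGQ _ ((hS x).mp hx)⟩

lemma genericInSystem_birationalOnto (hS : ∀ x : P 5, x ∈ S ↔ quad (E x.rep) = 0)
    (hμ : ∀ v, (fun i => eval v (μ.g i)) = U (quad (E v))) :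
    GenericInSystem (linSys S 3 1) fun F => BirationalOnto μ (hypersurface F) Set.univ := by
  intro N ψ hψ
  have hmem : ∀ c, ψ c ∈ linSys S 3 1 := fun c => hψ ▸ LinearMap.mem_range_self ψ c
  let φ (x : Fin 6 → ℂ) : (Fin N → ℂ) →ₗ[ℂ] ℂ :=
    ((aeval (E.symm x) : MvPolynomial (Fin 6) ℂ →ₐ[ℂ] ℂ).toLinearMap) ∘ₗ ψ
  have hφ : ∀ x c, φ x c = eval x (pullback E.symm.toLinearMap (ψ c)) := by
    intro x c
    rw [eval_pullback]
    simp [φ, aeval_eq_eval]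
  let a := functionalPoly (φ (secA fun _ => 1))
  let d := functionalPoly (φ (secB fun _ => 1))
  have heval : ∀ c, residualCond (pullback E.symm.toLinearMap (ψ c)) (fun _ => 1) =
      eval c (C 25 * (a ^ 2 + 25 * a * d + 125 * d ^ 2)) := by
    intro c
    simp only [a, d, map_mul, map_add, map_pow, eval_functionalPoly, hφ, residualCond,
      map_ofNat]
    norm_num [coordProd, secDisc, secTrace, secNorm, secForm]
    ring
  obtain ⟨c₀, hc₀⟩ : pullback E.toLinearMap ((2 * X 0 + X 1) * quad X 0) ∈ LinearMap.range ψ := by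
    rw [hψ]
    refine pullback_mem_linSys hS ?_ fun x hx => ?_
    · have hX := isHomogeneous_X ℂ (σ := Fin 6)
      exact (((isHomogeneous_C (Fin 6) (2 : ℂ)).mul (hX 0)).add
        (by simpa using hX 1)).mul (isHomogeneous_quad hX 0)
    · rw [map_mul, eval_quad_X, hx]
      simp
  refine genericAff_of_eval (C 25 * (a ^ 2 + 25 * a * d + 125 * d ^ 2)) c₀ ?_ fun c hc => ?_
  · rw [← heval, hc₀]
    have e : pullback E.symm.toLinearMap (pullback E.toLinearMap ((2 * X 0 + X 1) * quad X 0)) =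
        (2 * X 0 + X 1) * quad X 0 := MvPolynomial.funext fun v => by
      rw [eval_pullback, eval_pullback]
      simp
    rw [e]
    norm_num [residualCond, coordProd, secDisc, secTrace, secNorm, secForm, secA, secB, quad]
    exact ⟨one_ne_zero, one_ne_zero⟩
  · rw [← heval] at hc
    exact birationalOnto_of_residualCond hμ (mem_linSys_one.mp (hmem c)).1 rfl
      (fun x hx => pullback_symm_eval_eq_zero hS three_ne_zero (hmem c) hx) hc

end Birational

/-! ### Smoothness of the general cubic through the surface -/

section Openness

lemma homogeneousComponent_mul_of_isHomogeneous {σ : Type*} (a : MvPolynomial σ ℂ)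
    {f : MvPolynomial σ ℂ} {d : ℕ} (hf : f.IsHomogeneous d) (k : ℕ) :
    homogeneousComponent (k + d) (a * f) = homogeneousComponent k a * f := by
  let : GradedAlgebra (homogeneousSubmodule σ ℂ) := gradedAlgebra
  have h := DirectSum.coe_decompose_mul_add_of_right_mem (homogeneousSubmodule σ ℂ) (i := k)
    (a := a) (b := f) hf
  rw [← decomposition.decompose'_apply, ← decomposition.decompose'_apply]
  exact h

lemma eval_eq_sum_finsuppAntidiag {σ : Type*} [Fintype σ] [DecidableEq σ] {f : MvPolynomial σ ℂ}
    {D : ℕ} (hf : f.IsHomogeneous D) (v : σ → ℂ) :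
    eval v f = ∑ m ∈ Finset.univ.finsuppAntidiag D, coeff m f * ∏ i, v i ^ m i := by
  rw [eval_eq']
  refine Finset.sum_subset (fun m hm => ?_) fun m _ hm => ?_
  · rw [Finset.mem_finsuppAntidiag]
    refine ⟨?_, Finset.subset_univ _⟩
    rw [hf.degree_eq_sum_deg_support hm]
    exact (Finset.sum_subset (Finset.subset_univ _) (by simp)).symm
  · rw [notMem_support_iff.mp hm, zero_mul]

/-- If a family of polynomials has no common zero but the origin, the ideal it generates contains
all monomials of large degree. -/
lemma exists_pow_idealOfVars_le {σ ι : Type*} [Finite σ] (f : ι → MvPolynomial σ ℂ)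
    (hf : ∀ v : σ → ℂ, (∀ i, eval v (f i) = 0) → v = 0) :
    ∃ k, idealOfVars σ ℂ ^ k ≤ Ideal.span (Set.range f) := by
  refine Ideal.exists_pow_le_of_le_radical_of_fg ?_ (idealOfVars_fg σ ℂ)
  rw [← vanishingIdeal_zeroLocus_eq_radical (K := ℂ), idealOfVars, Ideal.span_le]
  rintro _ ⟨j, rfl⟩
  rw [SetLike.mem_coe, mem_vanishingIdeal_iff]
  intro v hv
  rw [mem_zeroLocus_iff] at hv
  have := hf v fun i => by
    simpa [aeval_eq_eval] using hv _ (Ideal.subset_span (Set.mem_range_self i))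
  simp [this]

lemma genericAff_smoothHypPoly {n N d : ℕ}
    (ψ : (Fin N → ℂ) →ₗ[ℂ] MvPolynomial (Fin (n + 1)) ℂ) (hψ : ∀ c, (ψ c).IsHomogeneous d)
    {c₀ : Fin N → ℂ} (h₀ : SmoothHypPoly (ψ c₀)) :
    GenericAff fun c => SmoothHypPoly (ψ c) := by
  obtain ⟨k, hk⟩ := exists_pow_idealOfVars_le (fun i => pderiv i (ψ c₀)) fun v hv => by
    by_contra h
    exact h₀ v h hv
  let T := (Finset.univ : Finset (Fin (n + 1))).finsuppAntidiag (k + 1 + (d - 1))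
  have hgen : ∀ m : T, ∃ a : Fin (n + 1) → MvPolynomial (Fin (n + 1)) ℂ,
      ∑ i, a i * pderiv i (ψ c₀) = monomial m.1 1 := by
    rintro ⟨m, hm⟩
    refine Ideal.mem_span_range_iff_exists_fun.mp (hk ?_)
    rw [monomial_mem_pow_idealOfVars_iff _ _ one_ne_zero, Finsupp.degree_eq_sum,
      (Finset.mem_finsuppAntidiag.mp hm).1]
    omega
  choose a ha using hgen
  let entry (m m' : T) : (Fin N → ℂ) →ₗ[ℂ] ℂ :=
    lcoeff ℂ m'.1 ∘ₗ (∑ i, LinearMap.mulLeft ℂ (a m i) ∘ₗ (pderiv i).toLinearMap) ∘ₗ ψ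
  have hentry : ∀ c m m', entry m m' c = coeff m'.1 (∑ i, a m i * pderiv i (ψ c)) := by
    intro c m m'
    simp [entry, coeff_sum]
  let G : Matrix T T (MvPolynomial (Fin N) ℂ) := Matrix.of fun m m' => functionalPoly (entry m m')
  have hG : ∀ c, eval c G.det = (Matrix.of fun m m' => entry m m' c).det := by
    intro c
    rw [RingHom.map_det]
    congr 1
    ext m m'
    simp [G]
  refine genericAff_of_eval G.det c₀ ?_ fun c hc v hv hvc => hv ?_
  · have : (Matrix.of fun m m' => entry m m' c₀) = 1 := by
      ext m m'
      rw [Matrix.of_apply, hentry, ha, coeff_monomial, Matrix.one_apply]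
      simp only [Subtype.ext_iff]
    rw [hG, this, Matrix.det_one]
    exact one_ne_zero
  · rw [hG] at hc
    have hmul : (Matrix.of fun m m' => entry m m' c).mulVec
        (fun m : T => ∏ i, v i ^ m.1 i) = 0 := by
      ext m
      let p := ∑ i, homogeneousComponent (k + 1) (a m i) * pderiv i (ψ c)
      have hpd : ∀ i, (pderiv i (ψ c)).IsHomogeneous (d - 1) := fun i => (hψ c).pderiv
      have hp : p.IsHomogeneous (k + 1 + (d - 1)) :=
        IsHomogeneous.sum _ _ _ fun i _ =>
          (homogeneousComponent_isHomogeneous _ _).mul (hpd i)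
      have hpeq : p = homogeneousComponent (k + 1 + (d - 1)) (∑ i, a m i * pderiv i (ψ c)) := by
        rw [map_sum]
        exact Finset.sum_congr rfl fun i _ =>
          (homogeneousComponent_mul_of_isHomogeneous _ (hpd i) _).symm
      have hpv : eval v p = 0 := by simp [p, hvc]
      rw [eval_eq_sum_finsuppAntidiag hp, ← Finset.sum_coe_sort] at hpv
      rw [Pi.zero_apply, ← hpv]
      refine Finset.sum_congr rfl fun m' _ => ?_
      change entry m m' c * _ = _
      rw [hentry, hpeq, coeff_homogeneousComponent, if_pos]
      rw [Finsupp.degree_eq_sum]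
      exact (Finset.mem_finsuppAntidiag.mp m'.2).1
    have hzero := Matrix.eq_zero_of_mulVec_eq_zero hc hmul
    ext j
    have hj : Finsupp.single j (k + 1 + (d - 1)) ∈ T := by
      rw [Finset.mem_finsuppAntidiag]
      exact ⟨Finsupp.univ_sum_single_apply j _, Finset.subset_univ _⟩
    have := congrFun hzero ⟨_, hj⟩
    simp only [Pi.zero_apply, Finset.prod_eq_zero_iff, Finset.mem_univ, true_and] at this
    obtain ⟨i, hi⟩ := this
    by_cases hij : i = j
    · exact hij ▸ eq_zero_of_pow_eq_zero hi
    · simp [Ne.symm hij] at hi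

end Openness

section ModelCubic

variable {R : Type*} [CommRing R]

/-- A cubic in the ideal of the five quadrics. -/
def cubic (x : Fin 6 → R) : R :=
  (x 1 + x 3) * quad x 1 + x 1 * quad x 4 + (x 2 + x 5) * quad x 0 + x 2 * quad x 2 +
    x 4 * quad x 3

/-- The gradient of `cubic`. -/
def cubicGrad (x : Fin 6 → R) : Fin 6 → R :=
  ![-2 * x 1 * x 2 - 2 * x 1 * x 5 - 2 * x 2 * x 3 - x 4 ^ 2 - 4 * x 0 * x 1 - 4 * x 0 * x 2
      - 2 * x 0 * x 5 - 2 * x 0 * x 4 - 2 * x 0 * x 3,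
    2 * x 1 * x 3 + 2 * x 1 * x 4 + x 3 ^ 2 - 2 * x 0 * x 2 - 2 * x 0 * x 5 - 2 * x 0 ^ 2,
    x 5 ^ 2 + 2 * x 2 * x 5 + 2 * x 2 * x 4 - 2 * x 0 * x 1 - 2 * x 0 * x 3 - 2 * x 0 ^ 2,
    x 1 ^ 2 + x 4 * x 5 + 2 * x 1 * x 3 - 2 * x 0 * x 2 - x 0 ^ 2,
    x 1 ^ 2 + x 2 ^ 2 + x 3 * x 5 - 2 * x 0 * x 4 - x 0 ^ 2,
    2 * x 2 * x 5 + x 2 ^ 2 + x 3 * x 4 - 2 * x 0 * x 1 - x 0 ^ 2]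

lemma map_cubicGrad {R' : Type*} [CommRing R'] (φ : R →+* R') (x : Fin 6 → R) (i : Fin 6) :
    φ (cubicGrad x i) = cubicGrad (fun j => φ (x j)) i := by
  have h2 : φ 2 = 2 := map_ofNat φ 2
  have h4 : φ 4 = 4 := map_ofNat φ 4
  fin_cases i <;> simp [cubicGrad, h2, h4]

lemma cubicGrad_smul (a : R) (x : Fin 6 → R) : cubicGrad (a • x) = a ^ 2 • cubicGrad x := by
  ext i
  fin_cases i <;> simp [cubicGrad] <;> ring

lemma eval_pderiv_cubic (v : Fin 6 → ℂ) (i : Fin 6) :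
    eval v (pderiv i (cubic X)) = cubicGrad v i := by
  fin_cases i <;> simp [cubic, cubicGrad, quad, pderiv_X] <;> ring

lemma isHomogeneous_cubic :
    (cubic (X : Fin 6 → MvPolynomial (Fin 6) ℂ)).IsHomogeneous 3 := by
  have hX := isHomogeneous_X ℂ (σ := Fin 6)
  have hQ := isHomogeneous_quad hX
  exact (((((hX 1).add (hX 3)).mul (hQ 1)).add ((hX 1).mul (hQ 4))).add
    (((hX 2).add (hX 5)).mul (hQ 0))).add ((hX 2).mul (hQ 2)) |>.add ((hX 4).mul (hQ 3))

/-- In characteristic two the gradient of `cubic` only vanishes at the origin. -/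
lemma eq_zero_of_cubicGrad_eq_zero_of_two_eq_zero {k : Type*} [Field k] (h2 : (2 : k) = 0)
    {x : Fin 6 → k} (hx : cubicGrad x = 0) : x = 0 := by
  have h0 : x 4 = 0 := pow_eq_zero_iff two_ne_zero |>.mp <| by
    have := congrFun hx 0
    simp only [cubicGrad, Matrix.cons_val, Pi.zero_apply] at this
    linear_combination -this - (x 1 * x 2 + x 1 * x 5 + x 2 * x 3 + 2 * x 0 * x 1
      + 2 * x 0 * x 2 + x 0 * x 5 + x 0 * x 4 + x 0 * x 3) * h2
  have h1 : x 3 = 0 := pow_eq_zero_iff two_ne_zero |>.mp <| by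
    have := congrFun hx 1
    simp only [cubicGrad, Matrix.cons_val, Pi.zero_apply] at this
    linear_combination this - (x 1 * x 3 + x 1 * x 4 - x 0 * x 2 - x 0 * x 5 - x 0 ^ 2) * h2
  have h3 : x 5 = 0 := pow_eq_zero_iff two_ne_zero |>.mp <| by
    have := congrFun hx 2
    simp only [cubicGrad, Matrix.cons_val, Pi.zero_apply] at this
    linear_combination this - (x 2 * x 5 + x 2 * x 4 - x 0 * x 1 - x 0 * x 3 - x 0 ^ 2) * h2
  have e3 := congrFun hx 3
  have e4 := congrFun hx 4
  have e5 := congrFun hx 5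
  simp only [cubicGrad, Matrix.cons_val, Pi.zero_apply, h0, h1, h3, h2] at e3 e4 e5
  have h4 : x 2 = 0 := pow_eq_zero_iff two_ne_zero |>.mp <| by linear_combination e4 - e3
  rw [h4] at e5
  have h5 : x 0 = 0 := pow_eq_zero_iff two_ne_zero |>.mp <| by linear_combination -e5
  rw [h5] at e3
  have h6 : x 1 = 0 := pow_eq_zero_iff two_ne_zero |>.mp <| by linear_combination e3
  ext i
  fin_cases i <;> assumption

/-- There is a valuation ring of `ℂ` with residue characteristic two. -/
lemma exists_valuationSubring_two_mem_nonunits :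
    ∃ B : ValuationSubring ℂ, (2 : ℂ) ∈ B.nonunits := by
  let A : Subring ℂ := (Int.castRingHom ℂ).range
  have h2 : (2 : ℂ) ∈ A := ⟨2, by simp⟩
  obtain ⟨B, -, hB⟩ := Ideal.image_subset_nonunits_valuationSubring
    (Ideal.span {(⟨2, h2⟩ : A)}) fun h => by
      rw [Ideal.span_singleton_eq_top, isUnit_iff_exists_inv] at h
      obtain ⟨⟨_, m, rfl⟩, h⟩ := h
      have h' : (2 : ℂ) * (m : ℂ) = 1 := congrArg Subtype.val h
      have : (2 : ℤ) * m = 1 := by exact_mod_cast h'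
      omega
  exact ⟨B, hB ⟨_, Ideal.mem_span_singleton_self _, rfl⟩⟩

lemma smoothHypPoly_cubic : SmoothHypPoly (cubic (X : Fin 6 → MvPolynomial (Fin 6) ℂ)) := by
  intro v hv h
  obtain ⟨B, hB⟩ := exists_valuationSubring_two_mem_nonunits
  obtain ⟨i, -, hi⟩ := Finset.exists_max_image Finset.univ (fun j => B.valuation (v j))
    Finset.univ_nonempty
  have hvi : v i ≠ 0 := by
    intro h0
    refine hv (funext fun j => ?_)
    simpa [h0] using hi j (Finset.mem_univ j)
  have hw : ∀ j, ∃ a : B, (a : ℂ) = (v i)⁻¹ * v j := by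
    intro j
    obtain ⟨a, ha⟩ := (B.valuation_le_iff _ _).mp (hi j (Finset.mem_univ j))
    exact ⟨a, by rw [← ha]; field_simp⟩
  choose w hw using hw
  have hgrad : cubicGrad w = 0 := by
    refine funext fun j => Subtype.val_injective ?_
    have e := map_cubicGrad B.subtype w j
    have hwv : (fun j => B.subtype (w j)) = (v i)⁻¹ • v := funext hw
    rw [hwv, cubicGrad_smul, Pi.smul_apply, ← eval_pderiv_cubic, h j, smul_zero] at e
    exact e
  have h2 : (2 : IsLocalRing.ResidueField B) = 0 := by
    have : (2 : B) ∈ IsLocalRing.maximalIdeal B := ValuationSubring.coe_mem_nonunits_iff.mp hB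
    rw [← map_ofNat (IsLocalRing.residue B) 2]
    exact (IsLocalRing.residue_eq_zero_iff _).mpr this
  have hres := eq_zero_of_cubicGrad_eq_zero_of_two_eq_zero h2
    (x := fun j => IsLocalRing.residue B (w j)) (by
      ext j
      rw [← map_cubicGrad, hgrad]
      simp)
  have hwi : w i = 1 := Subtype.val_injective (by rw [hw]; simp [hvi])
  have := congrFun hres i
  simp [hwi] at this

end ModelCubic

lemma smoothHypPoly_pullback (E : (Fin 6 → ℂ) ≃ₗ[ℂ] (Fin 6 → ℂ)) {f : MvPolynomial (Fin 6) ℂ}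
    (hf : SmoothHypPoly f) : SmoothHypPoly (n := 5) (pullback E.toLinearMap f) := by
  intro v hv h
  refine hf (E v) (by simpa using hv) fun i => ?_
  let φ : (Fin 6 → ℂ) →ₗ[ℂ] ℂ := Fintype.linearCombination ℂ fun k => eval (E v) (pderiv k f)
  have hφ : φ ∘ₗ E.toLinearMap = 0 := by
    refine LinearMap.pi_ext' fun i => LinearMap.ext_ring ?_
    have := h i
    rw [eval_pderiv_pullback] at this
    simpa [φ, Fintype.linearCombination_apply] using this
  have := LinearMap.congr_fun hφ (E.symm (Pi.single i 1))
  simpa [φ, Fintype.linearCombination_apply_single] using this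

lemma genericInSystem_smoothHypPoly {S : Set (P 5)} {E : (Fin 6 → ℂ) ≃ₗ[ℂ] (Fin 6 → ℂ)}
    (hS : ∀ x : P 5, x ∈ S ↔ quad (E x.rep) = 0) :
    GenericInSystem (linSys S 3 1) SmoothHypPoly := by
  intro N ψ hψ
  have hmem : ∀ c, ψ c ∈ linSys S 3 1 := fun c => hψ ▸ LinearMap.mem_range_self ψ c
  obtain ⟨c₀, hc₀⟩ : pullback E.toLinearMap (cubic X) ∈ LinearMap.range ψ := by
    rw [hψ]
    refine pullback_mem_linSys hS isHomogeneous_cubic fun x hx => ?_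
    simp [cubic, eval_quad_X, hx]
  exact genericAff_smoothHypPoly ψ (fun c => (mem_linSys_one.mp (hmem c)).1)
    (hc₀ ▸ smoothHypPoly_pullback E smoothHypPoly_cubic)

end QuinticDelPezzo

open QuinticDelPezzo in
/-- **Quintic del Pezzo surfaces and the congruence of their secant lines.**

Let `S ⊆ ℙ⁵` be a quintic del Pezzo surface: the image of `ℙ²` under the linear system of
plane cubics through four points in general position.  Then:

* `S` admits a congruence of secant lines: through the general point of `ℙ⁵` there passes a
  unique secant line to `S`;
* the linear system of quadric hypersurfaces through `S` is `5`-dimensional, and (any basis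
  of) it defines a dominant rational map `μ : ℙ⁵ ⇢ ℙ⁴`, whose general fibre is the general
  line of the congruence;
* if `X` is a general cubic fourfold containing `S`, the restriction `μ|_X : X ⇢ ℙ⁴` is
  birational. -/
theorem quintic_del_pezzo_secant_congruence
    (p : Fin 4 → P 2) (hp : GeneralPosition₄ p)
    (b : Fin 6 → MvPolynomial (Fin 3) ℂ) (hb : LinearIndependent ℂ b)
    (hbsys : Submodule.span ℂ (Set.range b) = linSys {x : P 2 | ∃ i, x = p i} 3 1)
    (S : Set (P 5)) (hS : S = planarImage b) :
    -- congruence of secant lines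
    (GenericP fun z : P 5 => ∃! L : Set (P 5), IsSecantLine L S ∧ z ∈ L) ∧
    -- the space of quadrics through S is 5-dimensional
    Module.finrank ℂ (linSys S 2 1) = 5 ∧
    -- behaviour of the induced rational map μ : ℙ⁵ ⇢ ℙ⁴
    ∀ μ : RatMap 5 4, μ.d = 2 → LinearIndependent ℂ μ.g →
      Submodule.span ℂ (Set.range μ.g) = linSys S 2 1 →
      -- μ is dominant
      DominantTo μ Set.univ Set.univ ∧
      -- the general fibre of μ is the unique secant line through a general point
      (GenericP fun z : P 5 =>
        ∃ L : Set (P 5), IsSecantLine L S ∧ z ∈ L ∧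
          {w : P 5 | w ∉ S ∧ μ.toFun w = μ.toFun z} = L \ S) ∧
      -- the restriction of μ to a general cubic fourfold through S is birational onto ℙ⁴
      GenericInSystem (linSys S 3 1) fun f =>
        SmoothHypPoly f ∧ BirationalOnto μ (hypersurface f) Set.univ := by
  subst hS
  obtain ⟨E, hE⟩ := exists_model_coordinates hp hbsys
  refine ⟨genericP_existsUnique_secant hE, finrank_linSys_two hE, fun μ _ hμ hspan => ?_⟩
  obtain ⟨U, hU⟩ := exists_target_coordinates hE hμ hspan
  exact ⟨dominantTo_univ hU, genericP_fibre hE hU, fun N ψ hψ =>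
    GenericAff.and (genericInSystem_smoothHypPoly hE N ψ hψ)
      (genericInSystem_birationalOnto hE hU N ψ hψ)⟩

end
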